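/- Let G be a finite rational group in which any two elements of the same odd order are conjugate, suppose every normal 2-subgroup of G is trivial (O_2(G) = 1), and suppose the unique minimal normal subgroup N of G is an elementary abelian q-group of order q^r for an odd prime q. Then N has a complement H in G (that is, G = HN with H ∩ N = 1), the orders of H and N are coprime, and N is a Sylow q-subgroup of G. -/

import Mathlib

theorem zsig (q n : ℕ) (hq : 3 ≤ q) (hn : ∀ a, n ≠ 2 ^ a) (hn0 : 0 < n) :
    ∃ p, p.Prime ∧ p ∣ q ^ n - 1 ∧ p ≠ 2 ∧ orderOf (q : ZMod p) = n := by
  have h2n : 2 ≤ n := by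
    have := hn 0
    simp at this; omega
  set F : ℕ := ((Polynomial.cyclotomic n ℤ).eval (q : ℤ)).natAbs with hF
  have hFpos : 0 < (Polynomial.cyclotomic n ℤ).eval (q : ℤ) :=
    Polynomial.cyclotomic_pos' n (by exact_mod_cast (by omega : 1 < q))
  have hFZ : (F : ℤ) = (Polynomial.cyclotomic n ℤ).eval (q : ℤ) := by
    rw [hF, Int.natCast_natAbs, abs_of_pos hFpos]
  have hlow : (q - 1) ^ n.totient < F := by
    have := Polynomial.sub_one_pow_totient_lt_natAbs_cyclotomic_eval (n := n) (q := q) (by omega) (by omega)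
    simpa [hF] using this
  have key : ∀ p, p.Prime → p ∣ F → ∀ a n', n = p ^ a * n' → ¬ p ∣ n' →
      orderOf (q : ZMod p) = n' := by
    intro p hp hpF a n' hnn hpn'
    have : Fact p.Prime := ⟨hp⟩
    have : NeZero (n' : ZMod p) := ⟨by rwa [Ne, ZMod.natCast_eq_zero_iff]⟩
    have h1 : (Polynomial.cyclotomic (p ^ a * n') (ZMod p)).IsRoot (q : ZMod p) := by
      rw [← hnn, Polynomial.IsRoot, ← Polynomial.map_cyclotomic n (Int.castRingHom (ZMod p))]
      have := Polynomial.eval_map_apply (f := Int.castRingHom (ZMod p)) (p := Polynomial.cyclotomic n ℤ) (x := (q : ℤ))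
      simp only [eq_intCast, Int.cast_natCast] at this
      rw [this, ← hFZ]
      simpa [ZMod.natCast_eq_zero_iff] using hpF
    have h2 := (Polynomial.isRoot_cyclotomic_prime_pow_mul_iff_of_charP (p := p)).1 h1
    exact h2.eq_orderOf.symm
  have hdvd : F ∣ q ^ n - 1 := by
    have := Polynomial.eval_dvd (x := (q : ℤ)) (Polynomial.cyclotomic.dvd_X_pow_sub_one n ℤ)
    rw [← hFZ] at this
    simp at this
    rw [← Int.natCast_dvd_natCast, Nat.cast_sub (Nat.one_le_pow _ _ (by omega))]
    simpa using this
  have hdecomp : ∀ p, p.Prime → ∃ a n', n = p ^ a * n' ∧ ¬ p ∣ n' := by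
    intro p hp
    obtain ⟨a, n', h, h'⟩ := Nat.exists_eq_pow_mul_and_not_dvd hn0.ne' p hp.ne_one
    exact ⟨a, n', h', h⟩
  by_contra hcon
  push Not at hcon
  have hle : ∀ p, p.Prime → p ∣ F → p ≠ 2 := by
    rintro p hp hpF rfl
    obtain ⟨a, n', h, h'⟩ := hdecomp 2 hp
    have hk := key 2 hp hpF a n' h h'
    have h3 : n' ∣ 1 := by
      have : Fact (Nat.Prime 2) := ⟨hp⟩
      by_cases h0 : (q : ZMod 2) = 0
      · rw [h0] at hk
        simp at hk
        subst hk
        simp at h'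
      · rw [← hk]
        exact ZMod.orderOf_dvd_card_sub_one h0
    rw [Nat.dvd_one] at h3
    subst h3
    exact hn a (by simpa using h)
  have hall : ∀ p, p.Prime → p ∣ F → p ∣ n := by
    intro p hp hpF
    by_contra hpn
    exact hcon p hp (hpF.trans hdvd) (hle p hp hpF) (key p hp hpF 0 n (by simp) hpn)
  have hF1 : F ≠ 1 := by
    have : 1 ≤ (q - 1) ^ n.totient := Nat.one_le_pow _ _ (by omega)
    omega
  obtain ⟨p, hp, hpF⟩ := Nat.exists_prime_and_dvd hF1
  have hlt : ∀ p p', p.Prime → p ∣ F → p'.Prime → p' ∣ F → p' ≠ p → p' < p := by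
    intro p p' hp hpF hp' hpF' hne
    have : Fact p.Prime := ⟨hp⟩
    obtain ⟨a, n', h, h'⟩ := hdecomp p hp
    have hk := key p hp hpF a n' h h'
    have h0 : (q : ZMod p) ≠ 0 := by
      intro h0
      rw [h0] at hk
      simp at hk
      subst hk
      simp at h'
    have h1 : n' ∣ p - 1 := hk ▸ ZMod.orderOf_dvd_card_sub_one h0
    have h2 : p' ∣ n' := by
      have := hall p' hp' hpF'
      rw [h] at this
      rcases (Nat.Prime.dvd_mul hp').1 this with h3 | h3
      · exact absurd ((Nat.prime_dvd_prime_iff_eq hp' hp).1 (hp'.dvd_of_dvd_pow h3)) hne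
      · exact h3
    have := Nat.le_of_dvd (by have := hp.two_le; omega) (h2.trans h1)
    have := hp.two_le
    omega
  have huniq : ∀ p', p'.Prime → p' ∣ F → p' = p := by
    intro p' hp' hpF'
    by_contra hne
    have h1 := hlt p p' hp hpF hp' hpF' hne
    have h2 := hlt p' p hp' hpF' hp hpF (Ne.symm hne)
    omega
  have hpow : F = p ^ F.primeFactorsList.length :=
    Nat.eq_prime_pow_of_unique_prime_dvd (by omega) (fun {d} hd hd' => huniq d hd hd')
  obtain ⟨s, hs⟩ := hall p hp hpF
  have hs0 : 0 < s := by
    rcases Nat.eq_zero_or_pos s with h | h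
    · subst h; omega
    · exact h
  have : Fact p.Prime := ⟨hp⟩
  have hps : p ∣ q ^ s - 1 := by
    obtain ⟨a, n', h, h'⟩ := hdecomp p hp
    have hk := key p hp hpF a n' h h'
    have h1 : n' ∣ s := by
      have : n' ∣ p * s := by rw [← hs, h]; exact dvd_mul_left _ _
      exact (Nat.Coprime.dvd_mul_left ((Nat.Prime.coprime_iff_not_dvd hp).2 h').symm).1 this
    have h2 : (q : ZMod p) ^ s = 1 := orderOf_dvd_iff_pow_eq_one.1 (hk ▸ h1)
    rw [← ZMod.natCast_eq_zero_iff, Nat.cast_sub (Nat.one_le_pow _ _ (by omega))]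
    simp [h2]
  have hpq : ¬ p ∣ q ^ s := by
    intro h
    have h1 : 1 ≤ q ^ s := Nat.one_le_pow _ _ (by omega)
    have := (Nat.dvd_sub h hps)
    rw [Nat.sub_sub_self h1] at this
    exact hp.one_lt.ne' (Nat.dvd_one.1 this)
  have hqs : 1 < q ^ s := Nat.one_lt_pow hs0.ne' (by omega)
  have hLTE : padicValNat p (q ^ n - 1) = padicValNat p (q ^ s - 1) + 1 := by
    have := padicValNat.pow_sub_pow (p := p) (x := q ^ s) (y := 1) (hp.odd_of_ne_two (hle p hp hpF))
      hqs (by simpa using hps) hpq (n := p) hp.ne_zero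
    rw [← pow_mul, mul_comm s p, ← hs] at this
    simpa using this
  have hmul : (q ^ s - 1) * F ∣ q ^ n - 1 := by
    have h1 := Polynomial.X_pow_sub_one_mul_cyclotomic_dvd_X_pow_sub_one_of_dvd ℤ (d := s) (n := n)
      (Nat.mem_properDivisors.2 ⟨⟨p, by rw [hs, mul_comm]⟩, by rw [hs]; nlinarith [hp.two_le]⟩)
    have := Polynomial.eval_dvd (x := (q : ℤ)) h1
    rw [Polynomial.eval_mul, ← hFZ] at this
    simp at this
    rw [← Int.natCast_dvd_natCast, Nat.cast_mul, Nat.cast_sub (Nat.one_le_pow _ _ (by omega)),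
       Nat.cast_sub (Nat.one_le_pow _ _ (by omega))]
    simpa using this
  have hqn : q ^ n - 1 ≠ 0 := by
    have : 1 < q ^ n := Nat.one_lt_pow hn0.ne' (by omega)
    omega
  have hval : padicValNat p F ≤ 1 := by
    have h1 := (padicValNat_dvd_iff_le (p := p) hqn (n := padicValNat p (q ^ s - 1) + padicValNat p F)).1
      (by
        rw [pow_add]
        exact (mul_dvd_mul pow_padicValNat_dvd pow_padicValNat_dvd).trans hmul)
    omega
  rw [hpow, padicValNat.prime_pow] at hval
  have hFp : F ≤ p := by
    rw [hpow]
    calc p ^ _ ≤ p ^ 1 := Nat.pow_le_pow_right hp.pos hval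
      _ = p := pow_one p
  have htot : p - 1 ≤ n.totient := by
    have h1 : p.totient ∣ n.totient := Nat.totient_dvd_of_dvd (hall p hp hpF)
    rw [Nat.totient_prime hp] at h1
    exact Nat.le_of_dvd (Nat.totient_pos.2 hn0) h1
  have h5 : 2 ^ (p - 1) ≤ (q - 1) ^ n.totient :=
    (Nat.pow_le_pow_right (by norm_num) htot).trans (Nat.pow_le_pow_left (by omega) _)
  have h6 : p - 1 < 2 ^ (p - 1) := Nat.lt_two_pow_self
  omega

theorem nt_main (q r : ℕ) (hq : 3 ≤ q) (hr : 0 < r)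
    (h : ∀ p, p.Prime → p ≠ 2 → p ∣ q ^ r - 1 → p - 1 ∣ r) : ∃ k, r = 2 ^ k := by
  obtain ⟨k, m, hm, hrm⟩ := Nat.exists_eq_pow_mul_and_not_dvd hr.ne' 2 (by norm_num)
  by_cases hm1 : m = 1
  · exact ⟨k, by simp [hrm, hm1]⟩
  exfalso
  have hm0 : 0 < m := by
    rcases Nat.eq_zero_or_pos m with h | h
    · subst h; simp at hm
    · exact h
  have hcop : m.Coprime 2 := ((Nat.Prime.coprime_iff_not_dvd Nat.prime_two).2 hm).symm
  have hz : ∀ i, ∃ p, p.Prime ∧ p ∣ q ^ (2 ^ i * m) - 1 ∧ p ≠ 2 ∧ orderOf (q : ZMod p) = 2 ^ i * m := by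
    intro i
    refine zsig q _ hq ?_ (by positivity)
    intro a ha
    have : m ∣ 2 ^ a := ha ▸ dvd_mul_left _ _
    exact hm1 (Nat.eq_one_of_dvd_coprimes (hcop.pow_right a) dvd_rfl this)
  choose p hp hpd hp2 hord using hz
  have hj : ∀ i ∈ Finset.range (k + 1), ∃ j ∈ Finset.Icc 1 k, p i - 1 = 2 ^ j * m := by
    intro i hi
    rw [Finset.mem_range] at hi
    have : Fact (p i).Prime := ⟨hp i⟩
    have h1 : p i - 1 ∣ r := by
      refine h _ (hp i) (hp2 i) ((hpd i).trans ?_)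
      apply Nat.pow_sub_one_dvd_pow_sub_one
      rw [hrm]
      exact mul_dvd_mul_right (pow_dvd_pow 2 (by omega)) m
    have h2 : 2 ^ i * m ∣ p i - 1 := by
      rw [← hord i]
      apply ZMod.orderOf_dvd_card_sub_one
      intro h0
      have := hord i
      rw [h0] at this
      simp at this
      have : 0 < 2 ^ i * m := by positivity
      omega
    obtain ⟨c, hc⟩ := (dvd_mul_left m (2 ^ i)).trans h2
    have h3 : c ∣ 2 ^ k := by
      rw [hc, hrm, mul_comm] at h1
      exact Nat.dvd_of_mul_dvd_mul_right hm0 h1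
    obtain ⟨j, hjk, hcj⟩ := (Nat.dvd_prime_pow Nat.prime_two).1 h3
    refine ⟨j, ?_, by rw [hc, hcj, mul_comm]⟩
    rw [Finset.mem_Icc]
    refine ⟨?_, hjk⟩
    by_contra hj0
    have hj0 : j = 0 := by omega
    subst hj0
    rw [hcj] at hc
    have := (hp i).odd_of_ne_two (hp2 i)
    obtain ⟨w, hw⟩ := this
    apply hm
    exact ⟨w, by omega⟩
  choose! j hj1 hj2 using hj
  obtain ⟨x, hx, y, hy, hxy, hjj⟩ := Finset.exists_ne_map_eq_of_card_lt_of_maps_to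
    (s := Finset.range (k + 1)) (t := Finset.Icc 1 k) (f := j) (by simp) (fun a ha => hj1 a ha)
  have h1 := hj2 x hx
  have h2 := hj2 y hy
  rw [hjj, ← h2] at h1
  have h3 : p x = p y := by
    have := (hp x).two_le
    have := (hp y).two_le
    omega
  have h4 := hord x
  rw [h3, hord y] at h4
  have h5 := Nat.eq_of_mul_eq_mul_right hm0 h4
  exact hxy (Nat.pow_right_injective le_rfl h5).symm

theorem nt_two (q k a : ℕ) (hq : 3 ≤ q) (hodd : Odd q) (ha : 0 < a) (hak : a < 2 ^ k) (v : ℕ)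
    (hv : ∀ w, 2 ^ w ∣ q ^ (2 ^ k) - 1 → w ≤ v) (h : 2 ^ v ∣ q ^ a - 1) 
    (h' : 2 ^ v ∣ q ^ (2 ^ k) - 1) : False := by
  have hg : 2 ^ v ∣ q ^ (Nat.gcd a (2 ^ k)) - 1 := by
    rw [← Nat.pow_sub_one_gcd_pow_sub_one]
    exact Nat.dvd_gcd h h'
  obtain ⟨j, hjk, hj⟩ := (Nat.dvd_prime_pow Nat.prime_two).1 (Nat.gcd_dvd_right a (2 ^ k))
  have hlt : j < k := by
    have h1 : 2 ^ j ≤ a := hj ▸ Nat.gcd_le_left _ ha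
    exact (Nat.pow_lt_pow_iff_right (by norm_num : 1 < 2)).1 (by omega : 2 ^ j < 2 ^ k)
  obtain ⟨k', rfl⟩ : ∃ k', k = k' + 1 := ⟨k - 1, by omega⟩
  have h1 : 2 ^ v ∣ q ^ (2 ^ k') - 1 := by
    rw [hj] at hg
    exact hg.trans (Nat.pow_sub_one_dvd_pow_sub_one _ (pow_dvd_pow 2 (by omega)))
  have h2 : 2 ^ (v + 1) ∣ q ^ (2 ^ (k' + 1)) - 1 := by
    have : q ^ (2 ^ (k' + 1)) - 1 = (q ^ (2 ^ k') - 1) * (q ^ (2 ^ k') + 1) := by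
      rw [pow_succ 2 k', pow_mul, mul_comm, ← Nat.sq_sub_sq]
    rw [this, pow_succ]
    apply mul_dvd_mul h1
    have := (hodd.pow (n := 2 ^ k')).add_odd odd_one
    exact this.two_dvd
  have := hv _ h2
  omega
open Polynomial in
theorem finrank_ker_prod {K V : Type*} [Field K] [AddCommGroup V] [Module K V] [FiniteDimensional K V]
    (f : Module.End K V) (S : Finset K) :
    Module.finrank K (LinearMap.ker (aeval f (∏ μ ∈ S, (X - C μ)))) =
      ∑ μ ∈ S, Module.finrank K (LinearMap.ker (aeval f (X - C μ))) := by
  classical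
  induction S using Finset.induction_on with
  | empty =>
    have h : LinearMap.ker (aeval f (∏ μ ∈ (∅ : Finset K), (X - C μ))) = ⊥ := by
      rw [Finset.prod_empty, map_one, Module.End.one_eq_id, LinearMap.ker_id]
    rw [h, finrank_bot, Finset.sum_empty]
  | insert a S ha ih =>
    rw [Finset.prod_insert ha, Finset.sum_insert ha, ← ih]
    have hco : IsCoprime (X - C a) (∏ μ ∈ S, (X - C μ)) := by
      apply IsCoprime.prod_right
      intro μ hμ
      apply Polynomial.isCoprime_X_sub_C_of_isUnit_sub
      rw [isUnit_iff_ne_zero, sub_ne_zero]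
      rintro rfl
      exact ha hμ
    rw [← sup_ker_aeval_eq_ker_aeval_mul_of_coprime f hco]
    have h := Submodule.finrank_sup_add_finrank_inf_eq (LinearMap.ker (aeval f (X - C a)))
      (LinearMap.ker (aeval f (∏ μ ∈ S, (X - C μ))))
    rw [(disjoint_ker_aeval_of_isCoprime f hco).eq_bot, finrank_bot, add_zero] at h
    exact h

open Polynomial in
theorem finrank_ker_step {K V : Type*} [Field K] [AddCommGroup V] [Module K V] [FiniteDimensional K V]
    (p : ℕ) (hp : p.Prime) (ζ : K) (hζ : IsPrimitiveRoot ζ p) (f : Module.End K V)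
    (hf : ∀ m : ℕ, m.Coprime p → ∃ g g' : Module.End K V, g * g' = 1 ∧ g' * g = 1 ∧ g * f * g' = f ^ m) :
    Module.finrank K (LinearMap.ker (f ^ p - 1)) ≡ Module.finrank K (LinearMap.ker (f - 1)) [MOD p - 1] := by
  classical
  have : NeZero p := ⟨hp.ne_zero⟩
  have h1 := finrank_ker_prod f (nthRootsFinset p (1 : K))
  rw [← X_pow_sub_one_eq_prod hp.pos hζ] at h1
  have hle : ∀ μ ν : K, IsPrimitiveRoot μ p → IsPrimitiveRoot ν p →
      Module.finrank K (LinearMap.ker (aeval f (X - C μ))) ≤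
      Module.finrank K (LinearMap.ker (aeval f (X - C ν))) := by
    intro μ ν hμ hν
    obtain ⟨m, hm, hcop, hmν⟩ := hμ.isPrimitiveRoot_iff.1 hν
    obtain ⟨g, g', hgg, hgg', hg⟩ := hf m hcop
    have hinj : Function.Injective g' := by
      intro a b hab
      have : g (g' a) = g (g' b) := by rw [hab]
      rwa [← Module.End.mul_apply, ← Module.End.mul_apply, hgg] at this
    have hmap : (LinearMap.ker (aeval f (X - C μ))).map g' ≤ LinearMap.ker (aeval f (X - C ν)) := by
      rintro _ ⟨w, hw, rfl⟩
      simp only [SetLike.mem_coe, LinearMap.mem_ker, map_sub, aeval_X, aeval_C, LinearMap.sub_apply,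
        Module.algebraMap_end_apply, sub_eq_zero] at hw ⊢
      have hpow : (f ^ m) w = ν • w := by
        rw [← hmν]
        clear hmν hm hcop hg
        induction m with
        | zero => simp
        | succ k ih => rw [pow_succ', Module.End.mul_apply, ih, map_smul, hw, smul_smul, pow_succ]
      have h2 : g' * (g * f * g') = f * g' := by
        rw [mul_assoc g, ← mul_assoc g', hgg', one_mul]
      rw [hg] at h2
      have h3 := congrArg (fun F => F w) h2
      simp only [Module.End.mul_apply, hpow, map_smul] at h3
      exact h3.symm
    rw [(Submodule.equivMapOfInjective g' hinj _).finrank_eq]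
    exact Submodule.finrank_mono hmap
  have h2 : (LinearMap.ker (f ^ p - 1)) = LinearMap.ker (aeval f (X ^ p - 1 : K[X])) := by simp
  have h3 : (LinearMap.ker (f - 1)) = LinearMap.ker (aeval f (X - C (1 : K))) := by simp
  rw [h2, h3, h1]
  have hmem1 : (1 : K) ∈ nthRootsFinset p (1 : K) := by
    rw [mem_nthRootsFinset hp.pos]; simp
  rw [← Finset.add_sum_erase _ _ hmem1]
  have h4 : ∀ μ ∈ (nthRootsFinset p (1 : K)).erase 1,
      Module.finrank K (LinearMap.ker (aeval f (X - C μ))) = Module.finrank K (LinearMap.ker (aeval f (X - C ζ))) := by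
    intro μ hμ
    rw [Finset.mem_erase, mem_nthRootsFinset hp.pos] at hμ
    have hprim : IsPrimitiveRoot μ p := by
      have := orderOf_eq_prime (p := p) (hp := ⟨hp⟩) hμ.2 hμ.1
      rw [← this]
      exact IsPrimitiveRoot.orderOf μ
    exact le_antisymm (hle _ _ hprim hζ) (hle _ _ hζ hprim)
  rw [Finset.sum_congr rfl h4, Finset.sum_const, Finset.card_erase_of_mem hmem1, hζ.card_nthRootsFinset]
  simp [Nat.ModEq]


/-- averaging operator over a subgroup -/
noncomputable def avgOp {K V Γ : Type*} [Field K] [AddCommGroup V] [Module K V] [Group Γ]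
    [Fintype Γ] (ρ : Γ →* Module.End K V) (H : Subgroup Γ) : Module.End K V :=
  by classical exact (Nat.card H : K)⁻¹ • ∑ h : Γ, if h ∈ H then ρ h else 0

/-- fixed space of a subgroup -/
def fixSp {K V Γ : Type*} [Field K] [AddCommGroup V] [Module K V] [Group Γ]
    (ρ : Γ →* Module.End K V) (H : Subgroup Γ) : Submodule K V where
  carrier := {v | ∀ h ∈ H, ρ h v = v}
  add_mem' := by
    intro a b ha hb h hh
    rw [map_add, ha h hh, hb h hh]
  zero_mem' := by
    intro h _
    simp
  smul_mem' := by
    intro c x hx h hh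
    rw [map_smul, hx h hh]

section avg
variable {K V Γ : Type*} [Field K] [AddCommGroup V] [Module K V] [Group Γ]
    [Fintype Γ] (ρ : Γ →* Module.End K V)

theorem mul_avgOp {H : Subgroup Γ} {g : Γ} (hg : g ∈ H) : ρ g * avgOp ρ H = avgOp ρ H := by
  classical
  unfold avgOp
  rw [mul_smul_comm, Finset.mul_sum]
  congr 1
  refine Fintype.sum_equiv (Equiv.mulLeft g) _ _ ?_
  intro x
  simp only [Equiv.coe_mulLeft, H.mul_mem_cancel_left hg, mul_ite, mul_zero, map_mul]

theorem avgOp_mul {H : Subgroup Γ} {g : Γ} (hg : g ∈ H) : avgOp ρ H * ρ g = avgOp ρ H := by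
  classical
  unfold avgOp
  rw [smul_mul_assoc, Finset.sum_mul]
  congr 1
  refine Fintype.sum_equiv (Equiv.mulRight g) _ _ ?_
  intro x
  simp only [Equiv.coe_mulRight, H.mul_mem_cancel_right hg, ite_mul, zero_mul, map_mul]

theorem avgOp_comm {H : Subgroup Γ} (hH : H.Normal) (g : Γ) : avgOp ρ H * ρ g = ρ g * avgOp ρ H := by
  classical
  unfold avgOp
  rw [smul_mul_assoc, Finset.sum_mul, mul_smul_comm, Finset.mul_sum]
  congr 1
  refine Fintype.sum_equiv (MulAut.conj g⁻¹).toEquiv _ _ ?_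
  intro x
  have : g⁻¹ * x * g ∈ H ↔ x ∈ H := by
    have := hH.mem_comm_iff (a := g⁻¹) (b := x * g)
    rw [← mul_assoc] at this
    rw [this]
    simp
  rw [mul_assoc] at this
  simp [this, ← map_mul, mul_assoc]

theorem sum_ite_card (H : Subgroup Γ) (A : Module.End K V) [DecidablePred (· ∈ H)] :
    ∑ h : Γ, (if h ∈ H then A else 0) = (Nat.card H : K) • A := by
  rw [← Finset.sum_filter, Finset.sum_const, Nat.cast_smul_eq_nsmul]
  congr 1
  rw [Nat.card_eq_fintype_card, Fintype.card_subtype]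

theorem avgOp_mul_of_fix {H : Subgroup Γ} (hc : (Nat.card H : K) ≠ 0) {A : Module.End K V}
    (hA : ∀ h ∈ H, ρ h * A = A) : avgOp ρ H * A = A := by
  classical
  unfold avgOp
  rw [smul_mul_assoc, Finset.sum_mul]
  have : ∀ h : Γ, (if h ∈ H then ρ h else 0) * A = if h ∈ H then A else 0 := by
    intro h
    split_ifs with hh
    · exact hA h hh
    · simp
  simp only [this]
  rw [sum_ite_card, smul_smul, inv_mul_cancel₀ hc, one_smul]

theorem mul_avgOp_of_fix {H : Subgroup Γ} (hc : (Nat.card H : K) ≠ 0) {A : Module.End K V}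
    (hA : ∀ h ∈ H, A * ρ h = A) : A * avgOp ρ H = A := by
  classical
  unfold avgOp
  rw [mul_smul_comm, Finset.mul_sum]
  have : ∀ h : Γ, A * (if h ∈ H then ρ h else 0) = if h ∈ H then A else 0 := by
    intro h
    split_ifs with hh
    · exact hA h hh
    · simp
  simp only [this]
  rw [sum_ite_card, smul_smul, inv_mul_cancel₀ hc, one_smul]

theorem avgOp_apply_of_fix {H : Subgroup Γ} (hc : (Nat.card H : K) ≠ 0) {v : V}
    (hv : ∀ h ∈ H, ρ h v = v) : avgOp ρ H v = v := by
  classical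
  unfold avgOp
  rw [LinearMap.smul_apply, LinearMap.sum_apply]
  have : ∀ h : Γ, (if h ∈ H then ρ h else 0) v = if h ∈ H then v else 0 := by
    intro h
    split_ifs with hh
    · exact hv h hh
    · simp
  simp only [this]
  rw [← Finset.sum_filter, Finset.sum_const, ← Nat.cast_smul_eq_nsmul K, ← Fintype.card_subtype,
    ← Nat.card_eq_fintype_card, smul_smul]
  have : Nat.card {x // x ∈ H} = Nat.card H := rfl
  rw [this, inv_mul_cancel₀ hc, one_smul]

theorem range_avgOp {H : Subgroup Γ} (hc : (Nat.card H : K) ≠ 0) :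
    LinearMap.range (avgOp ρ H) = fixSp ρ H := by
  apply le_antisymm
  · rintro _ ⟨w, rfl⟩ h hh
    rw [← Module.End.mul_apply, mul_avgOp ρ hh]
  · intro v hv
    exact ⟨v, avgOp_apply_of_fix ρ hc hv⟩

/-- the product of averages over two normal subgroups generating everything -/
theorem avgOp_mul_avgOp {H H' : Subgroup Γ} (hH : H.Normal) 
    (hsup : H ⊔ H' = ⊤) (hc : (Nat.card H : K) ≠ 0) (hc' : (Nat.card H' : K) ≠ 0)
    (hc'' : (Nat.card (⊤ : Subgroup Γ) : K) ≠ 0) :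
    avgOp ρ H * avgOp ρ H' = avgOp ρ ⊤ := by
  have h1 : ∀ g : Γ, ρ g * (avgOp ρ H * avgOp ρ H') = avgOp ρ H * avgOp ρ H' := by
    let S : Subgroup Γ :=
      { carrier := {g | ρ g * (avgOp ρ H * avgOp ρ H') = avgOp ρ H * avgOp ρ H'}
        mul_mem' := by
          intro a b ha hb
          simp only [Set.mem_ofPred_eq] at ha hb ⊢
          rw [map_mul, mul_assoc, hb, ha]
        one_mem' := by simp
        inv_mem' := by
          intro a ha
          simp only [Set.mem_ofPred_eq] at ha ⊢
          conv_lhs => rw [← ha]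
          rw [← mul_assoc, ← map_mul]
          simp }
    have hS : H ⊔ H' ≤ S := by
      rw [sup_le_iff]
      constructor
      · intro g hg
        change ρ g * (avgOp ρ H * avgOp ρ H') = avgOp ρ H * avgOp ρ H'
        rw [← mul_assoc, mul_avgOp ρ hg]
      · intro g hg
        change ρ g * (avgOp ρ H * avgOp ρ H') = avgOp ρ H * avgOp ρ H'
        rw [← mul_assoc, ← avgOp_comm ρ hH, mul_assoc, mul_avgOp ρ hg]
    intro g
    have : g ∈ S := hS (hsup ▸ Subgroup.mem_top g)
    exact this
  have h2 := avgOp_mul_of_fix ρ hc'' (fun g _ => h1 g)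
  rw [← h2, ← mul_assoc, mul_avgOp_of_fix ρ hc (fun g _ => avgOp_mul ρ (Subgroup.mem_top g)),
    mul_avgOp_of_fix ρ hc' (fun g _ => avgOp_mul ρ (Subgroup.mem_top g))]

end avg

theorem finrank_range_add {K V : Type*} [Field K] [AddCommGroup V] [Module K V]
    [FiniteDimensional K V] (e f : Module.End K V) (he : e * e = e) (hf : f * f = f) 
    (hef : e * f = 0) (hfe : f * e = 0) :
    Module.finrank K (LinearMap.range (e + f)) =
      Module.finrank K (LinearMap.range e) + Module.finrank K (LinearMap.range f) := by
  have h1 : LinearMap.range (e + f) = LinearMap.range e ⊔ LinearMap.range f := by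
    apply le_antisymm
    · rintro _ ⟨v, rfl⟩
      exact Submodule.add_mem_sup ⟨v, rfl⟩ ⟨v, rfl⟩
    · rw [sup_le_iff]
      constructor
      · rintro _ ⟨v, rfl⟩
        refine ⟨e v, ?_⟩
        rw [LinearMap.add_apply, ← Module.End.mul_apply, ← Module.End.mul_apply, he, hfe]
        simp
      · rintro _ ⟨v, rfl⟩
        refine ⟨f v, ?_⟩
        rw [LinearMap.add_apply, ← Module.End.mul_apply, ← Module.End.mul_apply, hf, hef]
        simp
  have h2 : LinearMap.range e ⊓ LinearMap.range f = ⊥ := by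
    rw [eq_bot_iff]
    rintro x ⟨⟨v, rfl⟩, ⟨w, hw⟩⟩
    have : e (e v) = e (f w) := by rw [hw]
    rw [← Module.End.mul_apply, ← Module.End.mul_apply, he, hef] at this
    simpa using this
  have h := Submodule.finrank_sup_add_finrank_inf_eq (LinearMap.range e) (LinearMap.range f)
  rw [h2, finrank_bot, add_zero] at h
  rw [h1, h]

theorem finrank_range_sum {K V ι : Type*} [Field K] [AddCommGroup V] [Module K V]
    [FiniteDimensional K V] (S : Finset ι) (e : ι → Module.End K V)
    (he : ∀ i ∈ S, e i * e i = e i) (ho : ∀ i ∈ S, ∀ j ∈ S, i ≠ j → e i * e j = 0) :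
    Module.finrank K (LinearMap.range (∑ i ∈ S, e i)) =
      ∑ i ∈ S, Module.finrank K (LinearMap.range (e i)) := by
  classical
  induction S using Finset.induction_on with
  | empty =>
    rw [Finset.sum_empty, Finset.sum_empty, LinearMap.range_zero, finrank_bot]
  | insert a S ha ih =>
    have hS1 : ∀ i ∈ S, e i * e i = e i := fun i hi => he i (Finset.mem_insert_of_mem hi)
    have hS2 : ∀ i ∈ S, ∀ j ∈ S, i ≠ j → e i * e j = 0 := fun i hi j hj =>
      ho i (Finset.mem_insert_of_mem hi) j (Finset.mem_insert_of_mem hj)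
    have hne : ∀ i ∈ S, i ≠ a := by
      rintro i hi rfl
      exact ha hi
    rw [Finset.sum_insert ha, Finset.sum_insert ha, ← ih hS1 hS2]
    apply finrank_range_add
    · exact he a (Finset.mem_insert_self _ _)
    · rw [Finset.sum_mul_sum]
      apply Finset.sum_congr rfl
      intro i hi
      rw [Finset.sum_eq_single i]
      · exact hS1 i hi
      · intro j hj hji
        exact hS2 i hi j hj hji.symm
      · exact fun h => absurd hi h
    · rw [Finset.mul_sum]
      apply Finset.sum_eq_zero
      intro i hi
      exact ho a (Finset.mem_insert_self _ _) i (Finset.mem_insert_of_mem hi) (hne i hi).symm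
    · rw [Finset.sum_mul]
      apply Finset.sum_eq_zero
      intro i hi
      exact ho i (Finset.mem_insert_of_mem hi) a (Finset.mem_insert_self _ _) (hne i hi)

theorem exists_index_family {Γ : Type*} [Group Γ] [Finite Γ] (p : ℕ) (hp : p.Prime)
    (hΓ : IsPGroup p Γ) (hcyc : ¬ IsCyclic Γ) :
    ∃ (K0 : Subgroup Γ) (S : Finset (Subgroup Γ)), S.card = p + 1 ∧
      Nat.card K0 * p ^ 2 = Nat.card Γ ∧ (∀ M ∈ S, M.Normal ∧ Nat.card M * p = Nat.card Γ ∧ K0 ≤ M) ∧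
      (∀ M ∈ S, ∀ M' ∈ S, M ≠ M' → M ⊔ M' = ⊤) ∧
      (∀ g, g ∉ K0 → ∃ M ∈ S, g ∈ M ∧ ∀ M' ∈ S, g ∈ M' → M' = M) := by
  classical
  have : Fact p.Prime := ⟨hp⟩
  have : Fintype (Subgroup Γ) := Fintype.ofFinite _
  obtain ⟨n, hn⟩ := (IsPGroup.iff_card (p := p)).1 hΓ
  have hn0 : n ≠ 0 := by
    rintro rfl
    apply hcyc
    have : Subsingleton Γ := by
      rw [← Finite.card_le_one_iff_subsingleton, hn]; simp
    infer_instance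
  obtain ⟨k, rfl⟩ := Nat.exists_eq_succ_of_ne_zero hn0
  have hmf : (Nat.card Γ).minFac = p := by
    rw [hn, Nat.Prime.pow_minFac hp (by omega)]
  have hnorm : ∀ M : Subgroup Γ, M.index = p → M.Normal := by
    intro M hM
    exact Subgroup.normal_of_index_eq_minFac_card (hM.trans hmf.symm)
  have hidx : ∀ M : Subgroup Γ, Nat.card M = p ^ k → M.index = p := by
    intro M hM
    have := M.card_mul_index
    rw [hM, hn, pow_succ] at this
    exact Nat.eq_of_mul_eq_mul_left (pow_pos hp.pos k) this
  have hover : ∀ H : Subgroup Γ, H ≠ ⊤ → ∃ M : Subgroup Γ, M.index = p ∧ H ≤ M := by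
    intro H hH
    obtain ⟨a, ha⟩ := (IsPGroup.iff_card (p := p)).1 (hΓ.to_subgroup H)
    have hak : a ≤ k := by
      have h1 : Nat.card H < Nat.card Γ := by
        apply lt_of_le_of_ne (Subgroup.card_le_card_group H)
        intro h
        exact hH (Subgroup.eq_top_of_card_eq H h)
      rw [ha, hn] at h1
      have := (Nat.pow_lt_pow_iff_right hp.one_lt).1 h1
      omega
    obtain ⟨M, hM, hHM⟩ := Sylow.exists_subgroup_card_pow_prime_le p (m := k)
      (hn ▸ pow_dvd_pow p (Nat.le_succ k)) H ha hak
    exact ⟨M, hidx M hM, hHM⟩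
  have hbot : (⊥ : Subgroup Γ) ≠ ⊤ := by
    intro h
    have h1 : Nat.card (⊥ : Subgroup Γ) = Nat.card Γ := by rw [h]; exact Subgroup.card_top
    rw [Subgroup.card_bot, hn] at h1
    exact absurd h1 (Nat.one_lt_pow (by omega) hp.one_lt).ne
  obtain ⟨M1, hM1, -⟩ := hover ⊥ hbot
  have hproper : ∀ M : Subgroup Γ, M.index = p → M ≠ ⊤ := by
    rintro M hM rfl
    rw [Subgroup.index_top] at hM
    exact hp.one_lt.ne hM
  obtain ⟨g, hg⟩ : ∃ g, g ∉ M1 := by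
    by_contra h
    push Not at h
    exact hproper M1 hM1 ((Subgroup.eq_top_iff' M1).2 h)
  obtain ⟨M2, hM2, hgM2⟩ := hover (Subgroup.zpowers g) (by
    intro h
    apply hcyc
    exact ⟨g, fun x => by
      have hx : x ∈ Subgroup.zpowers g := by rw [h]; trivial
      exact hx⟩)
  have hM12 : M1 ≠ M2 := by
    rintro rfl
    exact hg (hgM2 (Subgroup.mem_zpowers g))
  have hsup : ∀ M M' : Subgroup Γ, M.index = p → M'.index = p → M ≠ M' → M ⊔ M' = ⊤ := by
    intro M M' hM hM' hne
    have h1 : (M ⊔ M').index ∣ p := hM ▸ Subgroup.index_dvd_of_le le_sup_left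
    rcases (Nat.dvd_prime hp).1 h1 with h | h
    · exact Subgroup.index_eq_one.1 h
    · exfalso
      apply hne
      have key : ∀ A B : Subgroup Γ, A ≤ B → A.index = p → B.index = p → A = B := by
        intro A B hAB hA hB
        apply Subgroup.eq_of_le_of_card_ge hAB
        have e1 := A.card_mul_index
        have e2 := B.card_mul_index
        rw [hA] at e1
        rw [hB, ← e1] at e2
        exact (Nat.eq_of_mul_eq_mul_right hp.pos e2).le
      rw [key M _ le_sup_left hM h]
      exact (key M' _ le_sup_right hM' h).symm
  have hinf : ∀ M M' : Subgroup Γ, M.index = p → M'.index = p → M ≠ M' → (M ⊓ M').index = p ^ 2 := by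
    intro M M' hM hM' hne
    have hMn := hnorm M hM
    have h1 : M.relIndex M' = p := by
      rw [← Subgroup.relIndex_sup_left M' M, hsup M M' hM hM' hne, Subgroup.relIndex_top_right, hM]
    have h2 := Subgroup.relIndex_mul_index (H := M ⊓ M') (K := M') inf_le_right
    rw [Subgroup.inf_relIndex_right, h1, hM'] at h2
    rw [← h2, sq]
  set K0 := M1 ⊓ M2 with hK0
  have hK0i : K0.index = p ^ 2 := hinf M1 M2 hM1 hM2 hM12
  have hM1n := hnorm M1 hM1
  have hM2n := hnorm M2 hM2
  have hK0n : K0.Normal := by rw [hK0]; infer_instance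
  have hK0c : Nat.card K0 * p ^ 2 = Nat.card Γ := by rw [← hK0i]; exact K0.card_mul_index
  let S : Finset (Subgroup Γ) := Finset.univ.filter (fun M => K0 ≤ M ∧ M.index = p)
  have hS : ∀ M, M ∈ S ↔ K0 ≤ M ∧ M.index = p := by intro M; simp [S]
  have hMc : ∀ M ∈ S, Nat.card M * p = Nat.card Γ := by
    intro M hM
    rw [← ((hS M).1 hM).2]; exact M.card_mul_index
  have huniq : ∀ g, g ∉ K0 → ∃ M ∈ S, g ∈ M ∧ ∀ M' ∈ S, g ∈ M' → M' = M := by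
    intro g hg
    have hgp : g ^ p ∈ K0 := by
      refine ⟨?_, ?_⟩
      · rw [← hM1]; exact Subgroup.pow_index_mem M1 g
      · rw [← hM2]; exact Subgroup.pow_index_mem M2 g
    have hord : orderOf (QuotientGroup.mk g : Γ ⧸ K0) = p := by
      apply orderOf_eq_prime
      · rw [← QuotientGroup.mk_pow, QuotientGroup.eq_one_iff]; exact hgp
      · rwa [Ne, QuotientGroup.eq_one_iff]
    refine ⟨(Subgroup.zpowers (QuotientGroup.mk g : Γ ⧸ K0)).comap (QuotientGroup.mk' K0), ?_, ?_, ?_⟩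
    · rw [hS]
      constructor
      · intro x hx
        rw [Subgroup.mem_comap, QuotientGroup.mk'_apply, (QuotientGroup.eq_one_iff x).2 hx]
        exact one_mem _
      · rw [Subgroup.index_comap_of_surjective _ (QuotientGroup.mk'_surjective K0)]
        have h1 := (Subgroup.zpowers (QuotientGroup.mk g : Γ ⧸ K0)).card_mul_index
        rw [Nat.card_zpowers, hord] at h1
        have h2 : Nat.card (Γ ⧸ K0) = p ^ 2 := hK0i
        rw [h2, sq] at h1
        exact Nat.eq_of_mul_eq_mul_left hp.pos h1
    · rw [Subgroup.mem_comap]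
      exact Subgroup.mem_zpowers _
    · intro M' hM' hgM'
      have hA : ∀ A B : Subgroup Γ, A ∈ S → B ∈ S → g ∈ A → g ∈ B → A = B := by
        intro A B hA hB hgA hgB
        by_contra hne
        have h1 := hinf A B ((hS A).1 hA).2 ((hS B).1 hB).2 hne
        have h2 : K0 = A ⊓ B := by
          apply Subgroup.eq_of_le_of_card_ge (le_inf ((hS A).1 hA).1 ((hS B).1 hB).1)
          have e1 := (A ⊓ B).card_mul_index
          rw [h1, ← hK0c] at e1
          exact (Nat.eq_of_mul_eq_mul_right (pow_pos hp.pos 2) e1).le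
        exact hg (h2 ▸ ⟨hgA, hgB⟩)
      apply hA _ _ hM' _ hgM'
      · rw [Subgroup.mem_comap]; exact Subgroup.mem_zpowers _
      · rw [hS]
        constructor
        · intro x hx
          rw [Subgroup.mem_comap, QuotientGroup.mk'_apply, (QuotientGroup.eq_one_iff x).2 hx]
          exact one_mem _
        · rw [Subgroup.index_comap_of_surjective _ (QuotientGroup.mk'_surjective K0)]
          have h1 := (Subgroup.zpowers (QuotientGroup.mk g : Γ ⧸ K0)).card_mul_index
          rw [Nat.card_zpowers, hord] at h1
          have h2 : Nat.card (Γ ⧸ K0) = p ^ 2 := hK0i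
          rw [h2, sq] at h1
          exact Nat.eq_of_mul_eq_mul_left hp.pos h1
  refine ⟨K0, S, ?_, hK0c, fun M hM => ⟨hnorm M ((hS M).1 hM).2, hMc M hM, ((hS M).1 hM).1⟩,
    fun M hM M' hM' hne => hsup M M' ((hS M).1 hM).2 ((hS M').1 hM').2 hne, huniq⟩
  have : Fintype Γ := Fintype.ofFinite Γ
  have hcardM : ∀ M : Subgroup Γ, (Finset.univ.filter (fun g : Γ => g ∈ M)).card = Nat.card M := by
    intro M
    rw [Nat.card_eq_fintype_card, Fintype.card_subtype]
  have hd := Finset.sum_card_bipartiteAbove_eq_sum_card_bipartiteBelow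
    (s := S) (t := Finset.univ.filter (fun g : Γ => g ∉ K0)) (fun (M : Subgroup Γ) (g : Γ) => g ∈ M)
  have hb : ∀ g ∈ Finset.univ.filter (fun g : Γ => g ∉ K0),
      (Finset.bipartiteBelow (fun (M : Subgroup Γ) (g : Γ) => g ∈ M) S g).card = 1 := by
    intro g hg
    rw [Finset.mem_filter] at hg
    obtain ⟨M, hM, hgM, hu⟩ := huniq g hg.2
    rw [Finset.card_eq_one]
    refine ⟨M, ?_⟩
    ext M'
    rw [Finset.mem_bipartiteBelow, Finset.mem_singleton]
    constructor
    · rintro ⟨h1, h2⟩; exact hu M' h1 h2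
    · rintro rfl; exact ⟨hM, hgM⟩
  have ha : ∀ M ∈ S, (Finset.bipartiteAbove (fun (M : Subgroup Γ) (g : Γ) => g ∈ M)
      (Finset.univ.filter (fun g : Γ => g ∉ K0)) M).card = Nat.card K0 * (p - 1) := by
    intro M hM
    have h1 : Finset.bipartiteAbove (fun (M : Subgroup Γ) (g : Γ) => g ∈ M)
      (Finset.univ.filter (fun g : Γ => g ∉ K0)) M =
        (Finset.univ.filter (fun g : Γ => g ∈ M)) \ (Finset.univ.filter (fun g : Γ => g ∈ K0)) := by
      ext g
      simp [Finset.mem_bipartiteAbove, and_comm]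
    rw [h1, Finset.card_sdiff_of_subset, hcardM, hcardM]
    · have e := hMc M hM
      rw [← hK0c, sq, ← mul_assoc] at e
      rw [Nat.eq_of_mul_eq_mul_right hp.pos e, Nat.mul_sub, mul_one]
    · intro g hg
      rw [Finset.mem_filter] at hg ⊢
      exact ⟨hg.1, ((hS M).1 hM).1 hg.2⟩
  rw [Finset.sum_congr rfl ha, Finset.sum_congr rfl hb, Finset.sum_const, Finset.sum_const] at hd
  have hcompl : (Finset.univ.filter (fun g : Γ => g ∉ K0)).card + Nat.card K0 = Nat.card Γ := by
    have h := Finset.card_filter_add_card_filter_not (s := (Finset.univ : Finset Γ)) (fun g => g ∈ K0)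
    rw [hcardM, Finset.card_univ, ← Nat.card_eq_fintype_card] at h
    omega
  simp only [smul_eq_mul, mul_one] at hd
  rw [← hd, ← hK0c] at hcompl
  have hK0pos : 0 < Nat.card K0 := Nat.card_pos
  obtain ⟨w, hw⟩ : ∃ w, p = w + 1 := ⟨p - 1, by have := hp.pos; omega⟩
  have hw0 : 0 < w := by have := hp.two_le; omega
  have h5 : S.card * w + 1 = p ^ 2 := by
    have : p - 1 = w := by omega
    rw [this] at hcompl
    apply Nat.eq_of_mul_eq_mul_left hK0pos
    rw [← hcompl]; ring
  have h6 : S.card * w = (p + 1) * w := by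
    have : p ^ 2 = (p + 1) * w + 1 := by rw [hw]; ring
    omega
  exact Nat.eq_of_mul_eq_mul_right hw0 h6

theorem finrank_family {K V Γ : Type*} [Field K] [AddCommGroup V] [Module K V] [FiniteDimensional K V]
    [Group Γ] [Fintype Γ] (ρ : Γ →* Module.End K V) (p : ℕ) (hp : p.Prime)
    (hc : (Nat.card Γ : K) ≠ 0) (K0 : Subgroup Γ) (S : Finset (Subgroup Γ)) (hScard : S.card = p + 1)
    (hK0c : Nat.card K0 * p ^ 2 = Nat.card Γ)
    (hS : ∀ M ∈ S, M.Normal ∧ Nat.card M * p = Nat.card Γ ∧ K0 ≤ M)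
    (hsup : ∀ M ∈ S, ∀ M' ∈ S, M ≠ M' → M ⊔ M' = ⊤)
    (huniq : ∀ g, g ∉ K0 → ∃ M ∈ S, g ∈ M ∧ ∀ M' ∈ S, g ∈ M' → M' = M) :
    Module.finrank K (fixSp ρ K0) + p * Module.finrank K (fixSp ρ ⊤) =
      ∑ M ∈ S, Module.finrank K (fixSp ρ M) := by
  classical
  have hcH : ∀ H : Subgroup Γ, (Nat.card H : K) ≠ 0 := by
    intro H h
    obtain ⟨c, hc'⟩ := Subgroup.card_subgroup_dvd_card H
    apply hc
    rw [hc', Nat.cast_mul, h, zero_mul]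
  have hpK : (p : K) ≠ 0 := by
    intro h
    apply hc
    rw [← hK0c]; push_cast; rw [h]; simp
  set T := avgOp ρ ⊤ with hT
  set E0 := avgOp ρ K0 with hE0
  have hTM : ∀ H, T * avgOp ρ H = T := fun H =>
    mul_avgOp_of_fix ρ (hcH H) (fun g _ => avgOp_mul ρ (Subgroup.mem_top g))
  have hMT : ∀ H, avgOp ρ H * T = T := fun H =>
    avgOp_mul_of_fix ρ (hcH H) (fun g _ => mul_avgOp ρ (Subgroup.mem_top g))
  have hMM : ∀ H, avgOp ρ H * avgOp ρ H = avgOp ρ H := fun H =>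
    avgOp_mul_of_fix ρ (hcH H) (fun g hg => mul_avgOp ρ hg)
  have hdiff : ∀ H, Module.finrank K (fixSp ρ H) =
      Module.finrank K (LinearMap.range (avgOp ρ H - T)) + Module.finrank K (fixSp ρ ⊤) := by
    intro H
    rw [← range_avgOp ρ (hcH H), ← range_avgOp ρ (hcH ⊤), ← hT]
    rw [← finrank_range_add]
    · rw [sub_add_cancel]
    · rw [mul_sub, sub_mul, sub_mul, hMM, hTM, hMT, hTM]; simp
    · exact hTM _
    · rw [sub_mul, hMT, hTM]; simp
    · rw [mul_sub, hTM, hTM]; simp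
  have hsum : ∑ M ∈ S, (avgOp ρ M - T) = E0 - T := by
    have hkey : ∀ g : Γ, ∑ M ∈ S, (if g ∈ M then ρ g else 0) =
        ρ g + (p : K) • (if g ∈ K0 then ρ g else 0) := by
      intro g
      by_cases hg : g ∈ K0
      · rw [if_pos hg, Finset.sum_congr rfl (fun M hM => if_pos ((hS M hM).2.2 hg)), Finset.sum_const,
          hScard, add_smul, one_smul, Nat.cast_smul_eq_nsmul, add_comm]
      · rw [if_neg hg, smul_zero, add_zero]
        obtain ⟨M, hM, hgM, hu⟩ := huniq g hg
        rw [Finset.sum_eq_single_of_mem M hM]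
        · rw [if_pos hgM]
        · intro M' hM' hne
          rw [if_neg (fun h => hne (hu M' hM' h))]
    have htot : ∑ M ∈ S, (Nat.card M : K) • avgOp ρ M =
        (Nat.card (⊤ : Subgroup Γ) : K) • T + (p : K) • ((Nat.card K0 : K) • E0) := by
      have hun : ∀ H : Subgroup Γ, (Nat.card H : K) • avgOp ρ H = ∑ h : Γ, if h ∈ H then ρ h else 0 := by
        intro H
        unfold avgOp
        rw [smul_smul, mul_inv_cancel₀ (hcH H), one_smul]
      rw [hT, hE0, hun, hun, Finset.sum_congr rfl (fun M _ => hun M), Finset.sum_comm,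
        Finset.sum_congr rfl (fun g _ => hkey g), Finset.sum_add_distrib, Finset.smul_sum]
      simp
    have hMc : ∀ M ∈ S, (Nat.card M : K) = (Nat.card K0 : K) * p := by
      intro M hM
      have h1 := (hS M hM).2.1
      rw [← hK0c, sq, ← mul_assoc] at h1
      rw [Nat.eq_of_mul_eq_mul_right hp.pos h1]; push_cast; rfl
    have hTc : (Nat.card (⊤ : Subgroup Γ) : K) = (Nat.card K0 : K) * p * p := by
      rw [Subgroup.card_top, ← hK0c]; push_cast; ring
    rw [Finset.sum_congr rfl (fun M hM => by rw [hMc M hM]), ← Finset.smul_sum, hTc] at htot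
    have h3 : ∑ M ∈ S, avgOp ρ M = (p : K) • T + E0 := by
      have hne : (Nat.card K0 : K) * p ≠ 0 := mul_ne_zero (hcH K0) hpK
      apply smul_right_injective _ hne
      simp only
      rw [htot, smul_add, smul_smul, smul_smul, mul_comm (p : K) (Nat.card K0 : K)]
    rw [Finset.sum_sub_distrib, h3, Finset.sum_const, hScard, ← Nat.cast_smul_eq_nsmul K]
    push_cast
    rw [add_smul, one_smul]
    abel
  have hfr := finrank_range_sum S (fun M => avgOp ρ M - T)
    (by
      intro M _
      rw [mul_sub, sub_mul, sub_mul, hMM, hTM, hMT, hTM]; simp)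
    (by
      intro M hM M' hM' hne
      rw [mul_sub, sub_mul, sub_mul, hTM, hMT, hTM,
        avgOp_mul_avgOp ρ (hS M hM).1 (hsup M hM M' hM' hne) (hcH _) (hcH _) (hcH _)]
      simp [hT])
  rw [hsum] at hfr
  rw [hdiff K0, hfr, Finset.sum_congr rfl (fun M _ => hdiff M), Finset.sum_add_distrib, Finset.sum_const,
    hScard, smul_eq_mul]
  ring

theorem fixSp_top_modEq {K V : Type*} [Field K] [AddCommGroup V] [Module K V] [FiniteDimensional K V]
    (p : ℕ) (hp : p.Prime) (hpK : (p : K) ≠ 0) (n : ℕ) :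
    ∀ (Γ : Type) [Group Γ] [Finite Γ] (ρ : Γ →* Module.End K V), Nat.card Γ = n → IsPGroup p Γ →
    (∀ y : Γ, Module.finrank K (LinearMap.ker (ρ y - 1)) ≡ Module.finrank K V [MOD p - 1]) →
    Module.finrank K (fixSp ρ ⊤) ≡ Module.finrank K V [MOD p - 1] := by
  induction n using Nat.strong_induction_on with
  | _ n ih =>
  intro Γ _ _ ρ hcard hpg hy
  by_cases hcyc : IsCyclic Γ
  · obtain ⟨y, hgen⟩ := hcyc
    have : fixSp ρ ⊤ = LinearMap.ker (ρ y - 1) := by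
      ext v
      rw [LinearMap.mem_ker, LinearMap.sub_apply, Module.End.one_apply, sub_eq_zero]
      constructor
      · intro h; exact h y trivial
      · intro h g _
        let St : Subgroup Γ :=
          { carrier := {g | ρ g v = v}
            mul_mem' := by
              intro a b ha hb
              simp only [Set.mem_ofPred_eq] at ha hb ⊢
              rw [map_mul, Module.End.mul_apply, hb, ha]
            one_mem' := by simp
            inv_mem' := by
              intro a ha
              simp only [Set.mem_ofPred_eq] at ha ⊢
              conv_lhs => rw [← ha]
              rw [← Module.End.mul_apply, ← map_mul]
              simp }
        have h1 : Subgroup.zpowers y ≤ St := by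
          rw [Subgroup.zpowers_le]; exact h
        exact h1 (hgen g)
    rw [this]
    exact hy y
  · have : Fintype Γ := Fintype.ofFinite Γ
    obtain ⟨K0, S, hScard, hK0c, hS, hsup, huniq⟩ := exists_index_family p hp hpg hcyc
    have hc : (Nat.card Γ : K) ≠ 0 := by
      have : Fact p.Prime := ⟨hp⟩
      obtain ⟨k, hk⟩ := (IsPGroup.iff_card (p := p)).1 hpg
      rw [hk]; push_cast; exact pow_ne_zero _ hpK
    have hfam := finrank_family ρ p hp hc K0 S hScard hK0c hS hsup huniq
    have hsub : ∀ H : Subgroup Γ, Nat.card H < n →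
        Module.finrank K (fixSp ρ H) ≡ Module.finrank K V [MOD p - 1] := by
      intro H hH
      have h1 := ih (Nat.card H) hH H (ρ.comp H.subtype) rfl (hpg.to_subgroup H) (fun y => hy y)
      have h2 : fixSp (ρ.comp H.subtype) ⊤ = fixSp ρ H := by
        ext v
        constructor
        · intro h g hg; exact h ⟨g, hg⟩ trivial
        · intro h g _; exact h g g.2
      rwa [h2] at h1
    have hpos : ∀ H : Subgroup Γ, 0 < Nat.card H := fun H => Nat.card_pos
    have h0 := hsub K0 (by rw [← hcard, ← hK0c]; exact lt_mul_of_one_lt_right (hpos K0) (Nat.one_lt_pow (by norm_num) hp.one_lt))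
    have hM : ∀ M ∈ S, Module.finrank K (fixSp ρ M) ≡ Module.finrank K V [MOD p - 1] := by
      intro M hM
      apply hsub
      rw [← hcard, ← (hS M hM).2.1]; nlinarith [hpos M, hp.two_le]
    have hsumM : ∑ M ∈ S, Module.finrank K (fixSp ρ M) ≡ ∑ M ∈ S, Module.finrank K V [MOD p - 1] := by
      have : ∀ T ⊆ S, ∑ M ∈ T, Module.finrank K (fixSp ρ M) ≡ ∑ M ∈ T, Module.finrank K V [MOD p - 1] := by
        classical
        intro T hT
        induction T using Finset.induction_on with
        | empty => rfl
        | insert a T ha ihT =>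
          rw [Finset.sum_insert ha, Finset.sum_insert ha]
          exact (hM a (hT (Finset.mem_insert_self _ _))).add
            (ihT (fun x hx => hT (Finset.mem_insert_of_mem hx)))
      exact this S subset_rfl
    rw [← hfam, Finset.sum_const, hScard, smul_eq_mul] at hsumM
    have hp1 : p ≡ 1 [MOD p - 1] := by
      have : p = 1 + (p - 1) := by have := hp.two_le; omega
      conv_lhs => rw [this]
      simp [Nat.ModEq]
    set d := Module.finrank K V
    set a := Module.finrank K (fixSp ρ ⊤)
    have h2 : d + a ≡ d + d [MOD p - 1] := by
      calc d + a ≡ Module.finrank K (fixSp ρ K0) + p * a [MOD p - 1] := by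
            have := (hp1.mul_right a).symm
            rw [one_mul] at this
            exact h0.symm.add this
        _ ≡ (p + 1) * d [MOD p - 1] := hsumM
        _ ≡ (1 + 1) * d [MOD p - 1] := (hp1.add_right 1).mul_right d
        _ = d + d := by ring
    exact Nat.ModEq.add_left_cancel' d h2

theorem finrank_ker_pgroup {K V : Type*} [Field K] [AddCommGroup V] [Module K V] [FiniteDimensional K V]
    (p : ℕ) (hp : p.Prime) (ζ : K) (hζ : IsPrimitiveRoot ζ p) (k : ℕ) :
    ∀ (f : Module.End K V), f ^ (p ^ k) = 1 →
    (∀ m : ℕ, m.Coprime p → ∃ g g', g * g' = 1 ∧ g' * g = 1 ∧ g * f * g' = f ^ m) →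
    Module.finrank K (LinearMap.ker (f - 1)) ≡ Module.finrank K V [MOD p - 1] := by
  induction k with
  | zero =>
    intro f hf _
    rw [pow_zero, pow_one] at hf
    rw [hf, sub_self, LinearMap.ker_zero, finrank_top]
  | succ k ih =>
    intro f hf hc
    have h1 := finrank_ker_step p hp ζ hζ f hc
    refine h1.symm.trans (ih (f ^ p) ?_ ?_)
    · rw [← pow_mul, ← pow_succ', hf]
    · intro m hm
      obtain ⟨g, g', h1, h2, h3⟩ := hc m hm
      refine ⟨g, g', h1, h2, ?_⟩
      have : ∀ n : ℕ, g * f ^ n * g' = (g * f * g') ^ n := by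
        intro n
        induction n with
        | zero => simp [h1]
        | succ n ih =>
          rw [pow_succ (g * f * g'), ← ih, pow_succ]
          calc g * (f ^ n * f) * g' = g * f ^ n * 1 * f * g' := by simp only [mul_one, mul_assoc]
            _ = g * f ^ n * g' * (g * f * g') := by rw [← h2]; simp only [mul_assoc]
      rw [this, h3, ← pow_mul, ← pow_mul, mul_comm]

theorem claim1_lin (q p : ℕ) (hq : q.Prime) (hp : p.Prime) (hpq : p ≠ q) (W : Type) [AddCommGroup W]
    [Module (ZMod q) W] [Finite W] (Γ : Type) [Group Γ] [Finite Γ] (hpg : IsPGroup p Γ)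
    (σ : Γ →* Module.End (ZMod q) W) (hfix : ∀ w, (∀ g, σ g w = w) → w = 0)
    (hconj : ∀ y : Γ, ∀ m : ℕ, m.Coprime p → ∃ g g' : Module.End (ZMod q) W,
      g * g' = 1 ∧ g' * g = 1 ∧ g * σ y * g' = σ y ^ m) :
    p - 1 ∣ Module.finrank (ZMod q) W := by
  have : Fact q.Prime := ⟨hq⟩
  have : Fact p.Prime := ⟨hp⟩
  have : Fintype Γ := Fintype.ofFinite Γ
  let K := AlgebraicClosure (ZMod q)
  have : CharP K q := charP_of_injective_algebraMap (algebraMap (ZMod q) K).injective q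
  have hpK : (p : K) ≠ 0 := by
    intro h
    rw [CharP.cast_eq_zero_iff K q] at h
    exact hpq ((Nat.prime_dvd_prime_iff_eq hq hp).1 h).symm
  have : NeZero (p : K) := ⟨hpK⟩
  obtain ⟨ζ, hζ⟩ := (inferInstance : HasEnoughRootsOfUnity K p).prim
  have : FiniteDimensional (ZMod q) W := inferInstance
  let B := Module.End.baseChangeHom (ZMod q) K W
  let ρ : Γ →* Module.End K (TensorProduct (ZMod q) K W) := (B : _ →* _).comp σ
  have hρ : ∀ g, ρ g = B (σ g) := fun g => rfl
  have hmain := fixSp_top_modEq (K := K) p hp hpK _ Γ ρ rfl hpg (by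
    intro y
    obtain ⟨k, hk⟩ := hpg y
    apply finrank_ker_pgroup p hp ζ hζ k
    · rw [← map_pow, hk, map_one]
    · intro m hm
      obtain ⟨g, g', h1, h2, h3⟩ := hconj y m hm
      refine ⟨B g, B g', ?_, ?_, ?_⟩
      · rw [← map_mul, h1, map_one]
      · rw [← map_mul, h2, map_one]
      · rw [hρ, ← map_mul, ← map_mul, h3, map_pow])
  have hc : (Nat.card (⊤ : Subgroup Γ) : K) ≠ 0 := by
    rw [Subgroup.card_top]
    obtain ⟨k, hk⟩ := (IsPGroup.iff_card (p := p)).1 hpg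
    rw [hk]; push_cast; exact pow_ne_zero _ hpK
  have hsum : ∑ g : Γ, σ g = 0 := by
    ext w
    rw [LinearMap.zero_apply]
    apply hfix
    intro g
    rw [← Module.End.mul_apply, Finset.mul_sum]
    congr 1
    simp_rw [← map_mul]
    exact Fintype.sum_equiv (Equiv.mulLeft g) _ _ (fun x => rfl)
  have havg : avgOp ρ ⊤ = 0 := by
    unfold avgOp
    simp only [Subgroup.mem_top, if_true, hρ]
    rw [← map_sum, hsum, map_zero, smul_zero]
  rw [← range_avgOp ρ hc, havg, LinearMap.range_zero, finrank_bot, Module.finrank_baseChange] at hmain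
  exact (Nat.modEq_zero_iff_dvd.1 hmain.symm)

theorem dvd_card_of_orbits {S X : Type*} [Group S] [Finite X] [MulAction S X] (d : ℕ)
    (h : ∀ x : X, d ∣ (MulAction.stabilizer S x).index) : d ∣ Nat.card X := by
  classical
  have : Fintype (MulAction.orbitRel.Quotient S X) := Fintype.ofFinite _
  rw [Nat.card_congr (MulAction.selfEquivSigmaOrbits S X), Nat.card_sigma]
  apply Finset.dvd_sum
  intro ω _
  have h1 := MulAction.index_stabilizer S ω.out
  rw [Nat.card_coe_set_eq, ← h1]
  exact h _

theorem odd_class_in_normal {G : Type} [Group G] [Finite G]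
    (hodd : ∀ x y : G, Odd (orderOf x) → orderOf x = orderOf y → IsConj x y)
    (N : Subgroup G) (hN : N.Normal) (hNne : N ≠ ⊥) (q : ℕ) (hqodd : Odd q)
    (helem : ∀ x : G, x ∈ N → x ≠ 1 → orderOf x = q) (x : G) (hx : orderOf x = q) : x ∈ N := by
  obtain ⟨⟨z, hz⟩, hz0⟩ := Subgroup.ne_bot_iff_exists_ne_one.1 hNne
  have hz1 : z ≠ 1 := fun h => hz0 (Subtype.ext h)
  have hzq := helem z hz hz1
  obtain ⟨g, hg⟩ := isConj_iff.1 (hodd z x (hzq ▸ hqodd) (hzq.trans hx.symm))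
  rw [← hg]
  exact hN.conj_mem z hz g

theorem centralizer_index {G : Type} [Group G] [Finite G]
    (hodd : ∀ x y : G, Odd (orderOf x) → orderOf x = orderOf y → IsConj x y)
    (N : Subgroup G) (hN : N.Normal) (q : ℕ) (hqodd : Odd q)
    (helem : ∀ x : G, x ∈ N → x ≠ 1 → orderOf x = q) (z : G) (hz : z ∈ N) (hz1 : z ≠ 1) :
    (Subgroup.centralizer {z}).index = Nat.card N - 1 := by
  classical
  let X := {x : G // x ∈ N ∧ x ≠ 1}
  let act : MulAction G X :=
    { smul := fun g x => ⟨g * x.1 * g⁻¹, hN.conj_mem _ x.2.1 g, by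
        intro h; apply x.2.2; rwa [mul_inv_eq_one, mul_eq_left] at h⟩
      one_smul := by
        intro x; apply Subtype.ext; change 1 * x.1 * 1⁻¹ = x.1; simp
      mul_smul := by
        intro g h x; apply Subtype.ext
        change (g * h) * x.1 * (g * h)⁻¹ = g * (h * x.1 * h⁻¹) * g⁻¹; group }
  have hsm : ∀ (g : G) (x : X), (g • x).1 = g * x.1 * g⁻¹ := fun _ _ => rfl
  have : MulAction.IsPretransitive G X := ⟨by
    intro x y
    have hx := helem _ x.2.1 x.2.2
    have hy := helem _ y.2.1 y.2.2
    obtain ⟨g, hg⟩ := isConj_iff.1 (hodd x.1 y.1 (hx ▸ hqodd) (hx.trans hy.symm))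
    exact ⟨g, Subtype.ext hg⟩⟩
  have h1 := MulAction.index_stabilizer_of_transitive G (⟨z, hz, hz1⟩ : X)
  have h2 : MulAction.stabilizer G (⟨z, hz, hz1⟩ : X) = Subgroup.centralizer {z} := by
    ext g
    rw [MulAction.mem_stabilizer_iff, Subgroup.mem_centralizer_singleton_iff, Subtype.ext_iff, hsm,
      mul_inv_eq_iff_eq_mul]
  rw [← h2, h1]
  have h3 : Nat.card N = Nat.card X + 1 := by
    have e : X ≃ {n : N // n ≠ 1} :=
      { toFun := fun x => ⟨⟨x.1, x.2.1⟩, fun h => x.2.2 (congrArg Subtype.val h)⟩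
        invFun := fun n => ⟨n.1.1, n.1.2, fun h => n.2 (Subtype.ext h)⟩
        left_inv := fun x => rfl
        right_inv := fun x => rfl }
    rw [Nat.card_congr e]
    have h4 := Nat.card_congr (Equiv.sumCompl (fun n : N => n = 1))
    rw [Nat.card_sum] at h4
    have h5 : Nat.card {n : N // n = 1} = 1 := by simp
    rw [h5] at h4
    rw [← h4, add_comm]
  rw [h3]; rfl

theorem sylow_no_fix {G : Type} [Group G] [Finite G] (p : ℕ) (hp : p.Prime) (P : Sylow p G) (z : G)
    (hd : p ∣ (Subgroup.centralizer {z}).index) (h : ∀ g ∈ P, g * z = z * g) : False := by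
  have : Fact p.Prime := ⟨hp⟩
  have h1 : (P : Subgroup G) ≤ Subgroup.centralizer {z} := by
    intro g hg
    rw [Subgroup.mem_centralizer_singleton_iff]
    exact h g hg
  exact P.not_dvd_index (hd.trans (Subgroup.index_dvd_of_le h1))

/-- additive endomorphisms are linear over the prime field -/
def endToLin (q : ℕ) (W : Type) [AddCommGroup W] [Module (ZMod q) W] :
    AddMonoid.End W →* Module.End (ZMod q) W where
  toFun f := AddMonoidHom.toZModLinearMap q f
  map_one' := rfl
  map_mul' _ _ := rfl

/-- automorphisms of a commutative group as additive endomorphisms -/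
def autToEnd (A : Type) [CommGroup A] : MulAut A →* AddMonoid.End (Additive A) where
  toFun f := MonoidHom.toAdditive f.toMonoidHom
  map_one' := rfl
  map_mul' _ _ := rfl

theorem claim1_add (q p r : ℕ) (hq : q.Prime) (hp : p.Prime) (hpq : p ≠ q) (W : Type) [AddCommGroup W]
    [Finite W] [Module (ZMod q) W] (hcard : Nat.card W = q ^ r)
    (Γ : Type) [Group Γ] [Finite Γ] (hpg : IsPGroup p Γ)
    (φ : Γ →* AddMonoid.End W) (hfix : ∀ a, (∀ g, φ g a = a) → a = 0)
    (hconj : ∀ y : Γ, ∀ m : ℕ, m.Coprime p → ∃ g g' : AddMonoid.End W,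
      g * g' = 1 ∧ g' * g = 1 ∧ g * φ y * g' = φ y ^ m) :
    p - 1 ∣ r := by
  have : Fact q.Prime := ⟨hq⟩
  have hfr : Module.finrank (ZMod q) W = r := by
    have h1 := Module.natCard_eq_pow_finrank (K := ZMod q) (V := W)
    rw [Nat.card_zmod] at h1
    exact Nat.pow_right_injective hq.two_le (h1.symm.trans hcard)
  rw [← hfr]
  refine claim1_lin q p hq hp hpq W Γ hpg ((endToLin q W).comp φ) ?_ ?_
  · intro w hw
    exact hfix w (fun g => hw g)
  · intro y m hm
    obtain ⟨g, g', h1, h2, h3⟩ := hconj y m hm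
    refine ⟨endToLin q W g, endToLin q W g', ?_, ?_, ?_⟩
    · rw [← map_mul, h1, map_one]
    · rw [← map_mul, h2, map_one]
    · change endToLin q W g * endToLin q W (φ y) * endToLin q W g' = endToLin q W (φ y) ^ m
      rw [← map_mul, ← map_mul, h3, map_pow]

theorem claim1_grp (q p r : ℕ) (hq : q.Prime) (hp : p.Prime) (hpq : p ≠ q) (A : Type) [CommGroup A]
    [Finite A] (hcard : Nat.card A = q ^ r) (hA : ∀ a : A, a ^ q = 1)
    (Γ : Type) [Group Γ] [Finite Γ] (hpg : IsPGroup p Γ)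
    (φ : Γ →* MulAut A) (hfix : ∀ a, (∀ g, φ g a = a) → a = 1)
    (hconj : ∀ y : Γ, ∀ m : ℕ, m.Coprime p → ∃ g : MulAut A, g * φ y * g⁻¹ = φ y ^ m) :
    p - 1 ∣ r := by
  refine @claim1_add q p r hq hp hpq (Additive A) _ _ (AddCommGroup.zmodModule (fun a => hA a.toMul))
    hcard Γ _ _ hpg ((autToEnd A).comp φ) (fun w hw => hfix w.toMul (fun g => hw g)) ?_
  intro y m hm
  obtain ⟨g, hg⟩ := hconj y m hm
  refine ⟨autToEnd A g, autToEnd A g⁻¹, ?_, ?_, ?_⟩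
  · rw [← map_mul, mul_inv_cancel, map_one]
  · rw [← map_mul, inv_mul_cancel, map_one]
  · change autToEnd A g * autToEnd A (φ y) * autToEnd A g⁻¹ = autToEnd A (φ y) ^ m
    rw [← map_mul, ← map_mul, hg, map_pow]

theorem claim1 {G : Type} [Group G] [Finite G]
    (hrat : ∀ (g : G) (m : ℤ), Int.gcd m (orderOf g) = 1 → IsConj (g ^ m) g)
    (hodd : ∀ x y : G, Odd (orderOf x) → orderOf x = orderOf y → IsConj x y)
    (N : Subgroup G) (hN : N.Normal) 
    (q : ℕ) (hq : q.Prime) (hqodd : Odd q) (r : ℕ) (hr : 0 < r)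
    (hcard : Nat.card N = q ^ r)
    (hab : ∀ a b : N, a * b = b * a)
    (helem : ∀ x : G, x ∈ N → x ≠ 1 → orderOf x = q)
    (p : ℕ) (hp : p.Prime) (hpd : p ∣ q ^ r - 1) : p - 1 ∣ r := by
  have : Fact q.Prime := ⟨hq⟩
  have hpq : p ≠ q := by
    rintro rfl
    have h1 : p ∣ p ^ r := dvd_pow_self p hr.ne'
    have h2 := (Nat.dvd_sub_iff_right (Nat.one_le_pow _ _ hp.pos) h1).1 hpd
    exact hp.one_lt.ne' (Nat.dvd_one.1 h2)
  obtain ⟨P⟩ := (inferInstance : Nonempty (Sylow p G))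
  let cg : CommGroup N := { (inferInstance : Group N) with mul_comm := hab }
  refine claim1_grp q p r hq hp hpq N hcard ?_ P P.2
    ((MulAut.conjNormal : G →* MulAut N).comp (P : Subgroup G).subtype) ?_ ?_
  · intro w
    apply Subtype.ext
    by_cases h : w.1 = 1
    · simp [h]
    · have := pow_orderOf_eq_one w.1
      rw [helem _ w.2 h] at this
      simpa using this
  · intro w hw
    by_contra hne
    apply sylow_no_fix p hp P (w : G)
    · rw [centralizer_index hodd N hN q hqodd helem _ w.2, hcard]
      · exact hpd
      · intro h; apply hne; exact Subtype.ext h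
    · intro g hg
      have h1 : g * (w : G) * g⁻¹ = w := congrArg Subtype.val (hw ⟨g, hg⟩)
      rwa [mul_inv_eq_iff_eq_mul] at h1
  · intro y m hm
    have : Fact p.Prime := ⟨hp⟩
    obtain ⟨k, hk⟩ := (IsPGroup.iff_orderOf.1 P.2) y
    have h1 : Int.gcd (m : ℤ) (orderOf (y : G)) = 1 := by
      rw [Subgroup.orderOf_coe, hk, Int.gcd_natCast_natCast]
      exact Nat.Coprime.pow_right k hm
    obtain ⟨g, hg⟩ := isConj_iff.1 (hrat y m h1).symm
    refine ⟨MulAut.conjNormal g, ?_⟩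
    change MulAut.conjNormal g * MulAut.conjNormal (y : G) * (MulAut.conjNormal g)⁻¹ = MulAut.conjNormal (y : G) ^ m
    rw [← map_mul, ← map_inv, ← map_mul, hg, zpow_natCast, map_pow]

/-- a central involution of a 2-group -/
theorem central_involution {S : Type*} [Group S] [Finite S] (hS : IsPGroup 2 S) [Nontrivial S] :
    ∃ c : S, c ≠ 1 ∧ c * c = 1 ∧ ∀ s, c * s = s * c := by
  have : Fact (Nat.Prime 2) := ⟨Nat.prime_two⟩
  have hne := hS.center_nontrivial
  have hc : IsPGroup 2 (Subgroup.center S) := hS.to_subgroup _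
  obtain ⟨k, hk, hk2⟩ := hc.nontrivial_iff_card.1 hne
  obtain ⟨c, hc⟩ := exists_prime_orderOf_dvd_card' (G := Subgroup.center S) 2 (by
    rw [hk2]; exact dvd_pow_self 2 hk.ne')
  refine ⟨c, ?_, ?_, ?_⟩
  · intro h
    have : c = 1 := Subtype.ext h
    rw [this, orderOf_one] at hc
    omega
  · have := pow_orderOf_eq_one c
    rw [hc, sq] at this
    exact congrArg Subtype.val this
  · intro s
    exact (Subgroup.mem_center_iff.1 c.2 s).symm

theorem sylow_relIndex {G : Type*} [Group G] [Finite G] (p : ℕ) (hp : p.Prime) (P : Sylow p G)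
    (C : Subgroup G) (v : ℕ) (h : p ^ v ∣ C.index) : p ^ v ∣ (C.subgroupOf P).index := by
  have : Fact p.Prime := ⟨hp⟩
  have h1 : (C ⊓ P).index = C.relIndex P * (P : Subgroup G).index := by
    rw [← Subgroup.inf_relIndex_right]
    exact (Subgroup.relIndex_mul_index inf_le_right).symm
  have h2 : p ^ v ∣ (C ⊓ P).index := h.trans (Subgroup.index_dvd_of_le inf_le_left)
  rw [h1] at h2
  refine Nat.Coprime.dvd_of_dvd_mul_right ?_ h2
  exact Nat.Coprime.pow_left v ((Nat.Prime.coprime_iff_not_dvd hp).2 P.not_dvd_index)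

theorem claim2 {G : Type} [Group G] [Finite G]
    (hodd : ∀ x y : G, Odd (orderOf x) → orderOf x = orderOf y → IsConj x y)
    (N : Subgroup G) (hN : N.Normal) (hNne : N ≠ ⊥)
    (q : ℕ) (hq : q.Prime) (hqodd : Odd q) (k : ℕ)
    (hcard : Nat.card N = q ^ (2 ^ k))
    (hab : ∀ a b : N, a * b = b * a)
    (helem : ∀ x : G, x ∈ N → x ≠ 1 → orderOf x = q) :
    ∃ t : G, ∀ n ∈ N, t * n * t⁻¹ = n⁻¹ := by
  have hq3 : 3 ≤ q := by
    have := hq.two_le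
    rcases hqodd with ⟨j, rfl⟩
    omega
  have hab' : ∀ a ∈ N, ∀ b ∈ N, a * b = b * a := fun a ha b hb =>
    congrArg Subtype.val (hab ⟨a, ha⟩ ⟨b, hb⟩)
  obtain ⟨⟨z, hz⟩, hz0⟩ := Subgroup.ne_bot_iff_exists_ne_one.1 hNne
  have hz1 : z ≠ 1 := fun h => hz0 (Subtype.ext h)
  obtain ⟨S⟩ := (inferInstance : Nonempty (Sylow 2 G))
  let φ : S →* MulAut N := (MulAut.conjNormal : G →* MulAut N).comp (S : Subgroup G).subtype
  have hφ : ∀ (s : S) (n : N), ((φ s n : N) : G) = s * n * (s : G)⁻¹ := fun _ _ => rfl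
  have hpos : 1 < q ^ (2 ^ k) := Nat.one_lt_pow (by positivity) hq.one_lt
  have heven : 2 ∣ q ^ (2 ^ k) - 1 := by
    have : Odd (q ^ (2 ^ k)) := hqodd.pow
    rcases this with ⟨j, hj⟩
    omega
  have hrange : Nontrivial φ.range := by
    rw [Subgroup.nontrivial_iff_ne_bot]
    intro h
    apply sylow_no_fix 2 Nat.prime_two S z
    · rw [centralizer_index hodd N hN q hqodd helem z hz hz1, hcard]; exact heven
    · intro g hg
      have h1 : φ ⟨g, hg⟩ ∈ φ.range := ⟨_, rfl⟩
      rw [h, Subgroup.mem_bot] at h1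
      have h2 := hφ ⟨g, hg⟩ ⟨z, hz⟩
      rw [h1] at h2
      have h3 : z = g * z * g⁻¹ := h2
      rw [eq_mul_inv_iff_mul_eq] at h3
      exact h3.symm
  have hpr : IsPGroup 2 φ.range := IsPGroup.of_surjective S.2 φ.rangeRestrict φ.rangeRestrict_surjective
  obtain ⟨⟨_, c, rfl⟩, hc1, hc2, hc3⟩ := central_involution hpr
  have hcc : ∀ n ∈ N, (c : G) * ((c : G) * n * (c : G)⁻¹) * (c : G)⁻¹ = n := by
    intro n hn
    have h1 : φ c * φ c = 1 := congrArg Subtype.val hc2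
    have h2 : (φ c * φ c) ⟨n, hn⟩ = ⟨n, hn⟩ := by rw [h1]; rfl
    exact congrArg Subtype.val h2
  have hcs : ∀ s ∈ S, ∀ n ∈ N, (c : G) * (s * n * s⁻¹) * (c : G)⁻¹ = s * ((c : G) * n * (c : G)⁻¹) * s⁻¹ := by
    intro s hs n hn
    have h1 : φ c * φ ⟨s, hs⟩ = φ ⟨s, hs⟩ * φ c := congrArg Subtype.val (hc3 ⟨φ ⟨s, hs⟩, ⟨_, rfl⟩⟩)
    have h2 : (φ c * φ ⟨s, hs⟩) ⟨n, hn⟩ = (φ ⟨s, hs⟩ * φ c) ⟨n, hn⟩ := by rw [h1]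
    exact congrArg Subtype.val h2
  let Np : Subgroup G := N ⊓ Subgroup.centralizer {(c : G)}
  have hNp : ∀ n, n ∈ Np ↔ n ∈ N ∧ (c : G) * n * (c : G)⁻¹ = n := by
    intro n
    rw [Subgroup.mem_inf, Subgroup.mem_centralizer_singleton_iff, mul_inv_eq_iff_eq_mul]
    exact and_congr_right fun _ => eq_comm
  by_cases hbot : Np = ⊥
  · refine ⟨c, fun n hn => ?_⟩
    have hcn : (c : G) * n * (c : G)⁻¹ ∈ N := hN.conj_mem n hn c
    have h1 : ((c : G) * n * (c : G)⁻¹) * n ∈ Np := by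
      rw [hNp]
      refine ⟨N.mul_mem hcn hn, ?_⟩
      calc (c : G) * (((c : G) * n * (c : G)⁻¹) * n) * (c : G)⁻¹
          = ((c : G) * ((c : G) * n * (c : G)⁻¹) * (c : G)⁻¹) * ((c : G) * n * (c : G)⁻¹) := by group
        _ = n * ((c : G) * n * (c : G)⁻¹) := by rw [hcc n hn]
        _ = _ := hab' _ hn _ hcn
    rw [hbot, Subgroup.mem_bot] at h1
    exact eq_inv_of_mul_eq_one_left h1
  · exfalso
    have hle : Np ≤ N := inf_le_left
    have hdvd : Nat.card Np ∣ q ^ (2 ^ k) := hcard ▸ Subgroup.card_dvd_of_le hle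
    obtain ⟨a, ha, hca⟩ := (Nat.dvd_prime_pow hq).1 hdvd
    have ha0 : 0 < a := by
      rcases Nat.eq_zero_or_pos a with h | h
      · exfalso
        rw [h, pow_zero] at hca
        exact hbot (Subgroup.card_eq_one.1 hca)
      · exact h
    have hak : a < 2 ^ k := by
      refine lt_of_le_of_ne ha ?_
      rintro rfl
      have heq : Np = N := Subgroup.eq_of_le_of_card_ge hle (by rw [hca, hcard])
      apply hc1
      apply Subtype.ext
      change φ c = 1
      apply MulEquiv.ext
      intro n
      apply Subtype.ext
      have hn : (n : G) ∈ Np := by rw [heq]; exact n.2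
      exact ((hNp n).1 hn).2
    let v := (q ^ (2 ^ k) - 1).factorization 2
    have hne : q ^ (2 ^ k) - 1 ≠ 0 := by omega
    refine nt_two q k a hq3 hqodd ha0 hak v ?_ ?_ ?_
    · intro w hw
      exact (Nat.prime_two.pow_dvd_iff_le_factorization hne).1 hw
    · let X := {x : G // x ∈ Np ∧ x ≠ 1}
      let act : MulAction S X :=
        { smul := fun g x => ⟨g * x.1 * (g : G)⁻¹, by
            refine ⟨(hNp _).2 ⟨hN.conj_mem _ (hle x.2.1) g, ?_⟩, ?_⟩
            · rw [hcs g g.2 _ (hle x.2.1), ((hNp _).1 x.2.1).2]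
            · intro h; apply x.2.2; rwa [mul_inv_eq_one, mul_eq_left] at h⟩
          one_smul := by
            intro x; apply Subtype.ext; change (1 : G) * x.1 * (1 : G)⁻¹ = x.1; simp
          mul_smul := by
            intro g h x; apply Subtype.ext
            change ((g : G) * h) * x.1 * ((g : G) * h)⁻¹ = g * (h * x.1 * (h : G)⁻¹) * (g : G)⁻¹; group }
      have h3 : Nat.card Np = Nat.card X + 1 := by
        classical
        have e : X ≃ {n : Np // n ≠ 1} :=
          { toFun := fun x => ⟨⟨x.1, x.2.1⟩, fun h => x.2.2 (congrArg Subtype.val h)⟩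
            invFun := fun n => ⟨n.1.1, n.1.2, fun h => n.2 (Subtype.ext h)⟩
            left_inv := fun x => rfl
            right_inv := fun x => rfl }
        rw [Nat.card_congr e]
        have h4 := Nat.card_congr (Equiv.sumCompl (fun n : Np => n = 1))
        rw [Nat.card_sum] at h4
        have h5 : Nat.card {n : Np // n = 1} = 1 := by simp
        rw [h5] at h4
        rw [← h4, add_comm]
      have h6 : q ^ a - 1 = Nat.card X := by rw [← hca, h3]; rfl
      rw [h6]
      apply dvd_card_of_orbits (S := S)
      intro x
      have h7 : MulAction.stabilizer S x = (Subgroup.centralizer {x.1}).subgroupOf S := by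
        ext g
        rw [MulAction.mem_stabilizer_iff, Subgroup.mem_subgroupOf,
          Subgroup.mem_centralizer_singleton_iff, Subtype.ext_iff, ← mul_inv_eq_iff_eq_mul]
        rfl
      rw [h7]
      apply sylow_relIndex 2 Nat.prime_two
      rw [centralizer_index hodd N hN q hqodd helem x.1 (hle x.2.1) x.2.2, hcard]
      exact Nat.ordProj_dvd _ _
    · exact Nat.ordProj_dvd _ _

/-- a central element of prime order in a p-group -/
theorem central_prime {S : Type*} [Group S] [Finite S] (p : ℕ) (hp : p.Prime) (hS : IsPGroup p S)
    [Nontrivial S] : ∃ c : S, c ≠ 1 ∧ c ^ p = 1 ∧ ∀ s, c * s = s * c := by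
  have : Fact p.Prime := ⟨hp⟩
  have hne := hS.center_nontrivial
  have hc : IsPGroup p (Subgroup.center S) := hS.to_subgroup _
  obtain ⟨k, hk, hk2⟩ := hc.nontrivial_iff_card.1 hne
  obtain ⟨c, hc⟩ := exists_prime_orderOf_dvd_card' (G := Subgroup.center S) p (by
    rw [hk2]; exact dvd_pow_self p hk.ne')
  refine ⟨c, ?_, ?_, ?_⟩
  · intro h
    have : c = 1 := Subtype.ext h
    rw [this, orderOf_one] at hc
    exact hp.one_lt.ne hc
  · have := pow_orderOf_eq_one c
    rw [hc] at this
    exact congrArg Subtype.val this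
  · intro s
    exact (Subgroup.mem_center_iff.1 c.2 s).symm

theorem odd_pow_inverts {G : Type*} [Group G] (N : Subgroup G) (t : G)
    (ht : ∀ n ∈ N, t * n * t⁻¹ = n⁻¹) (b : ℕ) (hb : Odd b) : ∀ n ∈ N, t ^ b * n * (t ^ b)⁻¹ = n⁻¹ := by
  obtain ⟨j, rfl⟩ := hb
  induction j with
  | zero => simpa using ht
  | succ j ih =>
    intro n hn
    have h1 : t ^ (2 * (j + 1) + 1) = t * (t * t ^ (2 * j + 1)) := by
      rw [← pow_succ', ← pow_succ']; congr 1
    calc t ^ (2 * (j + 1) + 1) * n * (t ^ (2 * (j + 1) + 1))⁻¹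
        = t * (t * (t ^ (2 * j + 1) * n * (t ^ (2 * j + 1))⁻¹) * t⁻¹) * t⁻¹ := by rw [h1]; group
      _ = n⁻¹ := by rw [ih n hn, ht _ (N.inv_mem hn), inv_inv, ht n hn]

/-- the elements acting on a subgroup trivially or by inversion -/
def signSub {G : Type*} [Group G] (N : Subgroup G) : Subgroup G where
  carrier := {g | (∀ n ∈ N, g * n * g⁻¹ = n) ∨ (∀ n ∈ N, g * n * g⁻¹ = n⁻¹)}
  one_mem' := Or.inl (by simp)
  mul_mem' := by
    have key : ∀ g h n : G, g * h * n * (g * h)⁻¹ = g * (h * n * h⁻¹) * g⁻¹ := by intros; group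
    rintro g h (hg | hg) (hh | hh)
    · left; intro n hn; rw [key, hh n hn, hg n hn]
    · right; intro n hn; rw [key, hh n hn, hg _ (N.inv_mem hn)]
    · right; intro n hn; rw [key, hh n hn, hg n hn]
    · left; intro n hn; rw [key, hh n hn, hg _ (N.inv_mem hn), inv_inv]
  inv_mem' := by
    rintro g (hg | hg)
    · left; intro n hn
      have := hg n hn
      conv_lhs => rw [← this]
      group
    · right; intro n hn
      have := hg _ (N.inv_mem hn)
      rw [inv_inv] at this
      conv_lhs => rw [← this]
      group

theorem signSub_normal {G : Type*} [Group G] (N : Subgroup G) (hN : N.Normal) : (signSub N).Normal := by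
  have key : ∀ g h n : G, h * g * h⁻¹ * n * (h * g * h⁻¹)⁻¹ = h * (g * (h⁻¹ * n * h) * g⁻¹) * h⁻¹ := by
    intros; group
  have hm : ∀ h n : G, n ∈ N → h⁻¹ * n * h ∈ N := by
    intro h n hn
    have := hN.conj_mem n hn h⁻¹
    rwa [inv_inv] at this
  constructor
  rintro g (hg | hg) h
  · left; intro n hn; rw [key, hg _ (hm h n hn)]; group
  · right; intro n hn; rw [key, hg _ (hm h n hn)]; group

theorem qelt_centralizes {G : Type} [Group G] [Finite G] (N : Subgroup G) (hN : N.Normal)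
    (q : ℕ) (hq : q.Prime) (hqodd : Odd q)
    (hNq : ∀ x : G, x ^ q = 1 → x ∈ N) (helem : ∀ x ∈ N, x ^ q = 1)
    (t : G) (ht : ∀ n ∈ N, t * n * t⁻¹ = n⁻¹) (y : G) (j : ℕ) (hy : y ^ (q ^ j) = 1) :
    ∀ n ∈ N, y * n * y⁻¹ = n := by
  have hsq : ∀ n ∈ N, n = n⁻¹ → n = 1 := by
    intro n hn h
    have h1 : n ^ 2 = 1 := by rw [sq]; nth_rewrite 1 [h]; simp
    have h2 := helem n hn
    have h3 : n ^ (Nat.gcd 2 q) = 1 := pow_gcd_eq_one.2 ⟨h1, h2⟩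
    rwa [Nat.Coprime.gcd_eq_one (Nat.coprime_two_left.2 hqodd), pow_one] at h3
  have : Fact (Nat.Prime 2) := ⟨Nat.prime_two⟩
  have : Fact q.Prime := ⟨hq⟩
  have : (signSub N).Normal := signSub_normal N hN
  obtain ⟨a, b, hb, hab⟩ := Nat.exists_eq_two_pow_mul_odd (orderOf_pos t).ne'
  let u := t ^ b
  have hu : ∀ n ∈ N, u * n * u⁻¹ = n⁻¹ := odd_pow_inverts N t ht b hb
  have hu2 : u ^ (2 ^ a) = 1 := by
    change (t ^ b) ^ (2 ^ a) = 1
    rw [← pow_mul, mul_comm, ← hab, pow_orderOf_eq_one]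
  let u' : signSub N := ⟨u, Or.inr hu⟩
  have hu'2 : u' ^ (2 ^ a) = 1 := Subtype.ext hu2
  have hpg : IsPGroup 2 (Subgroup.zpowers u') := by
    rintro ⟨_, i, rfl⟩
    refine ⟨a, Subtype.ext ?_⟩
    change (u' ^ i) ^ (2 ^ a) = 1
    rw [← zpow_natCast, zpow_comm, zpow_natCast, hu'2, one_zpow]
  obtain ⟨T, hT⟩ := hpg.exists_le_sylow
  have hfr := Sylow.normalizer_sup_eq_top T
  set T' : Subgroup G := Subgroup.map (signSub N).subtype T with hT'
  have huT : u ∈ T' := ⟨u', hT (Subgroup.mem_zpowers u'), rfl⟩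
  have hTp : ∀ w ∈ T', ∃ i, w ^ (2 ^ i) = 1 := by
    rintro _ ⟨w, hw, rfl⟩
    obtain ⟨i, hi⟩ := T.2 ⟨w, hw⟩
    refine ⟨i, ?_⟩
    have h1 : w ^ (2 ^ i) = 1 := congrArg Subtype.val hi
    rw [← map_pow, h1, map_one]
  have hnd : ¬ q ∣ (signSub N).index := by
    intro hd
    have h1 : (signSub N).index = (signSub N).relIndex (Subgroup.normalizer (T' : Set G)) := by
      rw [← Subgroup.relIndex_sup_right, hfr, Subgroup.relIndex_top_right]
    rw [h1] at hd
    obtain ⟨⟨w, hw⟩, hwo⟩ := exists_prime_orderOf_dvd_card' q (hd.trans (Subgroup.relIndex_dvd_card _ _))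
    rw [Subgroup.orderOf_mk] at hwo
    have hwq : w ^ q = 1 := by rw [← hwo, pow_orderOf_eq_one]
    have hwN := hNq w hwq
    have h2 : w * u * w⁻¹ ∈ T' := (Subgroup.mem_normalizer_iff.1 hw u).1 huT
    have h3 : w * u * w⁻¹ * u⁻¹ ∈ T' := T'.mul_mem h2 (T'.inv_mem huT)
    have h4 : w * u * w⁻¹ * u⁻¹ = w * w := by
      calc w * u * w⁻¹ * u⁻¹ = w * (u * w⁻¹ * u⁻¹) := by group
        _ = w * w := by rw [hu _ (N.inv_mem hwN), inv_inv]
    rw [h4] at h3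
    obtain ⟨i, hi⟩ := hTp _ h3
    rw [← sq, ← pow_mul, ← pow_succ'] at hi
    have h5 : w ^ (Nat.gcd (2 ^ (i + 1)) q) = 1 := pow_gcd_eq_one.2 ⟨hi, hwq⟩
    rw [Nat.Coprime.gcd_eq_one (Nat.Coprime.pow_left _ (Nat.coprime_two_left.2 hqodd)), pow_one] at h5
    rw [h5, orderOf_one] at hwo
    exact hq.one_lt.ne hwo
  have hyD : y ∈ signSub N := by
    rw [← QuotientGroup.eq_one_iff]
    have h1 : (y : G ⧸ signSub N) ^ (signSub N).index = 1 := by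
      rw [← QuotientGroup.mk_pow, QuotientGroup.eq_one_iff]; exact Subgroup.pow_index_mem _ y
    have h2 : (y : G ⧸ signSub N) ^ (q ^ j) = 1 := by
      rw [← QuotientGroup.mk_pow, hy]; rfl
    have h3 := pow_gcd_eq_one.2 ⟨h1, h2⟩
    rwa [Nat.Coprime.gcd_eq_one (Nat.Coprime.pow_right _ ((Nat.Prime.coprime_iff_not_dvd hq).2 hnd).symm),
      pow_one] at h3
  rcases hyD with h | h
  · exact h
  · intro n hn
    have h1 := odd_pow_inverts N y h (q ^ j) hqodd.pow n hn
    rw [hy] at h1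
    have h2 : n = 1 := hsq n hn (by simpa using h1)
    simp [h2]

theorem pow_mul_of_central {G : Type*} [Group G] (x y n : G) (h : x * y = n * y * x) (hnx : n * x = x * n)
    (hny : n * y = y * n) (j : ℕ) : (y * x) ^ j = y ^ j * x ^ j * n ^ (j.choose 2) := by
  have cx : Commute n x := hnx
  have cy : Commute n y := hny
  have hj : ∀ j : ℕ, x ^ j * y = n ^ j * y * x ^ j := by
    intro j
    induction j with
    | zero => simp
    | succ j ih =>
      calc x ^ (j + 1) * y = x ^ j * (x * y) := by rw [pow_succ]; group
        _ = x ^ j * n * y * x := by rw [h]; group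
        _ = n * (x ^ j * y) * x := by rw [← (cx.pow_right j).eq]; group
        _ = n ^ (j + 1) * y * x ^ (j + 1) := by rw [ih, pow_succ' n, pow_succ x]; simp only [mul_assoc]
  induction j with
  | zero => simp
  | succ j ih =>
    have c1 : Commute (n ^ (j.choose 2)) (y * x) := (cy.mul_right cx).pow_left _
    have c2 : Commute (n ^ j) y := cy.pow_left _
    have c3 : Commute (n ^ (j + j.choose 2)) (y ^ (j + 1) * x ^ (j + 1)) :=
      ((cy.pow_right _).mul_right (cx.pow_right _)).pow_left _
    have c4 : Commute (n ^ (j.choose 2)) (y ^ j) := (cy.pow_right _).pow_left _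
    have c5 : Commute (n ^ j) (y ^ j) := (cy.pow_right _).pow_left _
    have c6 : Commute (n ^ (j.choose 2)) (x ^ j) := (cx.pow_right _).pow_left _
    calc (y * x) ^ (j + 1) = y ^ j * (x ^ j * n ^ (j.choose 2)) * (y * x) := by
          rw [pow_succ, ih]; simp only [mul_assoc]
      _ = y ^ j * n ^ (j.choose 2) * (x ^ j * y) * x := by rw [← c6.eq]; simp only [mul_assoc]
      _ = y ^ j * n ^ (j.choose 2) * n ^ j * y * (x ^ j * x) := by rw [hj]; simp only [mul_assoc]
      _ = n ^ (j.choose 2) * (y ^ j * n ^ j) * y * (x ^ j * x) := by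
          rw [← c4.eq]; simp only [mul_assoc]
      _ = n ^ (j.choose 2) * n ^ j * (y ^ j * y * (x ^ j * x)) := by
          rw [← c5.eq]; simp only [mul_assoc]
      _ = n ^ (j + j.choose 2) * (y ^ (j + 1) * x ^ (j + 1)) := by
          rw [← pow_add, add_comm, pow_succ y, pow_succ x]
      _ = _ := by rw [c3.eq, Nat.choose_succ_succ' j 1, Nat.choose_one_right]

theorem rat_contra {G : Type} [Group G] [Finite G]
    (hrat : ∀ (g : G) (m : ℤ), Int.gcd m (orderOf g) = 1 → IsConj (g ^ m) g)
    (q : ℕ) (hq : q.Prime) (Q : Sylow q G) (x : G) (hx : orderOf x = q ^ 2)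
    (hc : ∀ s ∈ Q, s * x = x * s) : False := by
  have : Fact q.Prime := ⟨hq⟩
  have hco : (1 + q).Coprime (orderOf x) := by
    rw [hx]; apply Nat.Coprime.pow_right; simp
  obtain ⟨g, hg⟩ := isConj_iff.1 (hrat x ((1 + q : ℕ) : ℤ) (by rw [Int.gcd_natCast_natCast]; exact hco)).symm
  rw [zpow_natCast] at hg
  obtain ⟨m, hm⟩ := exists_pow_eq_self_of_coprime hco
  let M := Subgroup.centralizer {x}
  have hM : ∀ h, h ∈ M ↔ Commute h x := fun h => Subgroup.mem_centralizer_singleton_iff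
  have hgM : g ∈ Subgroup.normalizer (M : Set G) := by
    rw [Subgroup.mem_normalizer_iff]
    intro h
    rw [hM, hM]
    have h1 : Commute h x ↔ Commute (g * h * g⁻¹) (g * x * g⁻¹) := by
      exact (Commute.conj_iff g).symm
    rw [h1, hg]
    constructor
    · intro h2
      have := h2.pow_right m
      rwa [hm] at this
    · intro h2
      exact h2.pow_right _
  have hQM : (Q : Subgroup G) ≤ M := fun s hs => (hM s).2 (hc s hs)
  let L := M.subgroupOf (Subgroup.normalizer (M : Set G))
  have hLn : L.Normal := Subgroup.normal_in_normalizer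
  have hLi : ¬ q ∣ L.index := by
    intro hd
    have h1 : L.index ∣ M.index := Subgroup.relIndex_dvd_index_of_le Subgroup.le_normalizer
    exact Q.not_dvd_index (hd.trans (h1.trans (Subgroup.index_dvd_of_le hQM)))
  have hpw : ∀ j : ℕ, g ^ j * x * (g ^ j)⁻¹ = x ^ ((1 + q) ^ j) := by
    intro j
    induction j with
    | zero => simp
    | succ j ih =>
      calc g ^ (j + 1) * x * (g ^ (j + 1))⁻¹ = g * (g ^ j * x * (g ^ j)⁻¹) * g⁻¹ := by
            rw [pow_succ']; group
        _ = (g * x * g⁻¹) ^ ((1 + q) ^ j) := by rw [ih, conj_pow]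
        _ = _ := by rw [hg, ← pow_mul, ← pow_succ']
  have h2 : g ^ L.index ∈ M := Subgroup.pow_index_mem L ⟨g, hgM⟩
  have h3 : x ^ ((1 + q) ^ L.index) = x ^ 1 := by
    rw [← hpw, pow_one, mul_inv_eq_iff_eq_mul]
    exact (hM _).1 h2
  rw [pow_eq_pow_iff_modEq, hx] at h3
  have h4 : ∀ j : ℕ, (1 + q) ^ j ≡ 1 + j * q [MOD q ^ 2] := by
    intro j
    induction j with
    | zero => simp; rfl
    | succ j ih =>
      rw [pow_succ]
      refine (ih.mul_right _).trans ?_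
      have : (1 + j * q) * (1 + q) = 1 + (j + 1) * q + j * q ^ 2 := by ring
      rw [this]
      exact Nat.add_mul_modulus_modEq_iff.2 rfl
  have h5 := (h4 L.index).symm.trans h3
  have h6 : q ^ 2 ∣ L.index * q := by
    have := (Nat.modEq_iff_dvd' (by omega)).1 h5.symm
    simpa using this
  rw [sq] at h6
  exact hLi (Nat.dvd_of_mul_dvd_mul_right hq.pos h6)

theorem claim3 {G : Type} [Group G] [Finite G]
    (hrat : ∀ (g : G) (m : ℤ), Int.gcd m (orderOf g) = 1 → IsConj (g ^ m) g)
    (N : Subgroup G) (hN : N.Normal)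
    (q : ℕ) (hq : q.Prime) (hqodd : Odd q)
    (hNq : ∀ x : G, x ^ q = 1 → x ∈ N) (helem : ∀ x ∈ N, x ^ q = 1)
    (t0 : G) (ht0 : ∀ n ∈ N, t0 * n * t0⁻¹ = n⁻¹) (Q : Sylow q G) : (Q : Subgroup G) = N := by
  have : Fact q.Prime := ⟨hq⟩
  have hsq : ∀ n ∈ N, n = n⁻¹ → n = 1 := by
    intro n hn h
    have h1 : n ^ 2 = 1 := by rw [sq]; nth_rewrite 1 [h]; simp
    have h2 := helem n hn
    have h3 : n ^ (Nat.gcd 2 q) = 1 := pow_gcd_eq_one.2 ⟨h1, h2⟩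
    rwa [Nat.Coprime.gcd_eq_one (Nat.coprime_two_left.2 hqodd), pow_one] at h3
  have hQp : ∀ s ∈ Q, ∃ j, s ^ (q ^ j) = 1 := by
    intro s hs
    obtain ⟨j, hj⟩ := Q.2 ⟨s, hs⟩
    exact ⟨j, congrArg Subtype.val hj⟩
  have hcent : ∀ s ∈ Q, ∀ n ∈ N, s * n = n * s := by
    intro s hs n hn
    obtain ⟨j, hj⟩ := hQp s hs
    have := qelt_centralizes N hN q hq hqodd hNq helem t0 ht0 s j hj n hn
    rwa [mul_inv_eq_iff_eq_mul] at this
  have hNQ : N ≤ Q := by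
    have h1 : IsPGroup q N := by
      intro n
      refine ⟨1, Subtype.ext ?_⟩
      rw [pow_one]
      exact helem n n.2
    have h2 : IsPGroup q (N ⊔ Q : Subgroup G) := h1.to_sup_of_normal_left Q.2
    rw [← Q.is_maximal' h2 le_sup_right]
    exact le_sup_left
  by_contra hne
  obtain ⟨t, htQ, ht⟩ : ∃ t ∈ Subgroup.normalizer (Q : Set G), ∀ n ∈ N, t * n * t⁻¹ = n⁻¹ := by
    have hQC : (Q : Subgroup G) ≤ Subgroup.centralizer (N : Set G) := by
      intro s hs
      rw [Subgroup.mem_centralizer_iff]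
      intro n hn
      exact (hcent s hs n hn).symm
    have hfr := Sylow.normalizer_sup_eq_top' Q hQC
    have h1 : t0 ∈ Subgroup.normalizer (Q : Set G) ⊔ Subgroup.centralizer (N : Set G) := by
      have : t0 ∈ (⊤ : Subgroup G) := trivial
      rw [← hfr] at this
      exact this
    obtain ⟨t, ht, c, hc, rfl⟩ := Subgroup.mem_sup_of_normal_right.1 h1
    refine ⟨t, ht, fun n hn => ?_⟩
    rw [← ht0 n hn]
    have h2 := Subgroup.mem_centralizer_iff.1 hc n hn
    calc t * n * t⁻¹ = t * (n * c) * c⁻¹ * t⁻¹ := by group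
      _ = t * c * n * (t * c)⁻¹ := by rw [h2]; group
  have htQ' : ∀ s ∈ Q, t * s * t⁻¹ ∈ Q := fun s hs => ((Subgroup.mem_normalizer_iff (H := (Q : Subgroup G))).1 htQ s).1 hs
  have hfix : ∀ j : ℕ, ∀ s, s ^ (q ^ j) = 1 → t * s * t⁻¹ = s → s = 1 := by
    intro j
    induction j with
    | zero => intro s hs _; simpa using hs
    | succ j ih =>
      intro s hs hts
      have h1 : s ^ q = 1 := by
        apply ih
        · rw [← pow_mul, ← pow_succ', hs]
        · rw [← conj_pow, hts]
      have h2 := hNq s h1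
      exact hsq s h2 (by rw [← ht s h2, hts])
  have hsurj : ∀ w ∈ Q, ∃ s ∈ Q, s⁻¹ * (t * s * t⁻¹) = w := by
    let F : Q → Q := fun s => ⟨(s : G)⁻¹ * (t * s * t⁻¹), Q.mul_mem (Q.inv_mem s.2) (htQ' s s.2)⟩
    have hinj : Function.Injective F := by
      intro s u h
      have h1 : (s : G)⁻¹ * (t * s * t⁻¹) = (u : G)⁻¹ * (t * u * t⁻¹) := congrArg Subtype.val h
      have hm : (u : G) * (s : G)⁻¹ ∈ Q := Q.mul_mem u.2 (Q.inv_mem s.2)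
      obtain ⟨j, hj⟩ := hQp _ hm
      have h2 := hfix j _ hj (by
        calc t * ((u : G) * (s : G)⁻¹) * t⁻¹
            = (u : G) * ((u : G)⁻¹ * (t * u * t⁻¹)) * (t * s * t⁻¹)⁻¹ := by group
          _ = (u : G) * (s : G)⁻¹ := by rw [← h1]; group)
      exact Subtype.ext (mul_inv_eq_one.1 h2).symm
    have hs := Finite.surjective_of_injective hinj
    intro w hw
    obtain ⟨s, hs⟩ := hs ⟨w, hw⟩
    exact ⟨s, s.2, congrArg Subtype.val hs⟩
  obtain ⟨x, hxQ, hxN, hxq, hxc⟩ : ∃ x ∈ Q, x ∉ N ∧ x ^ q ∈ N ∧ ∀ s ∈ Q, x * s * x⁻¹ * s⁻¹ ∈ N := by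
    let N' := N.subgroupOf Q
    have hnt : Nontrivial (Q ⧸ N') := by
      rw [QuotientGroup.nontrivial_iff]
      intro h
      rw [Subgroup.subgroupOf_eq_top] at h
      exact hne (le_antisymm h hNQ)
    have hpq : IsPGroup q (Q ⧸ N') := IsPGroup.to_quotient Q.2 N'
    obtain ⟨c, hc1, hcq, hcc⟩ := central_prime q hq hpq
    obtain ⟨x, rfl⟩ := QuotientGroup.mk_surjective c
    have hmem : ∀ y : (Q : Subgroup G), (y : Q ⧸ N') = 1 ↔ (y : G) ∈ N := by
      intro y
      rw [QuotientGroup.eq_one_iff]; rfl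
    refine ⟨x, x.2, fun h => hc1 ((hmem x).2 h), ?_, ?_⟩
    · exact (hmem (x ^ q)).1 hcq
    · intro s hs
      refine (hmem (x * ⟨s, hs⟩ * x⁻¹ * ⟨s, hs⟩⁻¹)).1 ?_
      have := hcc ((⟨s, hs⟩ : (Q : Subgroup G)) : Q ⧸ N')
      rw [QuotientGroup.mk_mul, QuotientGroup.mk_mul, QuotientGroup.mk_mul, this]
      simp
  have hyQ := htQ' x hxQ
  have hyx : (t * x * t⁻¹) * x ∈ N := by
    set y := t * x * t⁻¹ with hy
    apply hNq
    have hn := hxc y hyQ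
    have h1 := pow_mul_of_central x y (x * y * x⁻¹ * y⁻¹) (by group) (hcent x hxQ _ hn).symm
      (hcent y hyQ _ hn).symm q
    have h2 : (x * y * x⁻¹ * y⁻¹) ^ (q.choose 2) = 1 := by
      obtain ⟨j, hj⟩ := hqodd
      have hj1 : q ∣ q.choose 2 := hq.dvd_choose_self (by norm_num) (by have := hq.two_le; omega)
      obtain ⟨i, hi⟩ := hj1
      rw [hi, pow_mul, helem _ hn, one_pow]
    have h3 : y ^ q = (x ^ q)⁻¹ := by rw [hy, conj_pow, ht _ hxq]
    rw [h1, h2, h3]; group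
  have hxZ : ∀ w ∈ Q, w * x = x * w := by
    intro w hw
    obtain ⟨s, hs, rfl⟩ := hsurj w hw
    set s' := t * s * t⁻¹ with hs'
    have hs'Q : s' ∈ Q := htQ' s hs
    have hm := hxc s hs
    have hm' := hxc s' hs'Q
    set m := x * s * x⁻¹ * s⁻¹ with hmd
    set m' := x * s' * x⁻¹ * s'⁻¹ with hmd'
    set y := t * x * t⁻¹ with hy
    set n := y * x with hnd
    have e1 : y = n * x⁻¹ := by rw [hnd]; group
    have e2 : m⁻¹ = y * s' * y⁻¹ * s'⁻¹ := by
      rw [← ht m hm, hmd, hs', hy]; group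
    have e3 : y * s' * y⁻¹ * s'⁻¹ = x⁻¹ * s' * x * s'⁻¹ := by
      have hc := hcent (x⁻¹ * s' * x) (Q.mul_mem (Q.mul_mem (Q.inv_mem hxQ) hs'Q) hxQ) n hyx
      calc y * s' * y⁻¹ * s'⁻¹ = n * (x⁻¹ * s' * x) * n⁻¹ * s'⁻¹ := by rw [e1]; group
        _ = x⁻¹ * s' * x * s'⁻¹ := by rw [← hc]; group
    have e4 : x⁻¹ * s' * x * s'⁻¹ = m'⁻¹ := by
      have hc := hcent x hxQ m' hm'
      calc x⁻¹ * s' * x * s'⁻¹ = x⁻¹ * (m'⁻¹) * x := by rw [hmd']; group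
        _ = x⁻¹ * m'⁻¹ * (x * m') * m'⁻¹ := by group
        _ = m'⁻¹ := by rw [hc]; group
    have e5 : m = m' := inv_injective (e2.trans (e3.trans e4))
    have e6 : x * (s⁻¹ * s') * x⁻¹ = s⁻¹ * s' := by
      calc x * (s⁻¹ * s') * x⁻¹ = (m * s)⁻¹ * (m' * s') := by rw [hmd, hmd']; group
        _ = s⁻¹ * s' := by rw [e5]; group
    rw [mul_inv_eq_iff_eq_mul] at e6
    exact e6.symm
  refine rat_contra hrat q hq Q x ?_ hxZ
  apply orderOf_eq_prime_pow
  · rw [pow_one]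
    exact fun h => hxN (hNq x h)
  · rw [pow_succ, pow_one, pow_mul]
    exact helem _ hxq

/-- **Claim 3 in the proof of Theorem B.** Let `G` be a finite rational
group in which elements of the same odd order are conjugate, with `O₂(G) = 1`, and
suppose the unique minimal normal subgroup `N` of `G` is elementary abelian of order
`q ^ r` for an odd prime `q`.  Then `N` has a complement `H` in `G`, `|H|` and `|N|`
are coprime, and `N` is a Sylow `q`-subgroup of `G`. -/
theorem minimal_normal_elementary_abelian_complement (G : Type) [Group G] [Finite G]
    (hrat : ∀ (g : G) (m : ℤ), Int.gcd m (orderOf g) = 1 → IsConj (g ^ m) g)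
    (hodd : ∀ x y : G, Odd (orderOf x) → orderOf x = orderOf y → IsConj x y)
    (hO2 : ∀ H : Subgroup G, H.Normal → IsPGroup 2 H → H = ⊥)
    (N : Subgroup G) (hN : N.Normal) (hNne : N ≠ ⊥)
    (hmono : ∀ M : Subgroup G, M.Normal → M ≠ ⊥ → N ≤ M)
    (q : ℕ) (hq : q.Prime) (hqodd : Odd q) (r : ℕ) (hr : 0 < r)
    (hcard : Nat.card N = q ^ r)
    (hab : ∀ a b : N, a * b = b * a)
    (helem : ∀ x : G, x ∈ N → x ≠ 1 → orderOf x = q) :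
    ∃ H : Subgroup G, H.IsComplement' N ∧
      Nat.Coprime (Nat.card H) (Nat.card N) ∧
      ∃ P : Sylow q G, (P : Subgroup G) = N := by
  have : Fact q.Prime := ⟨hq⟩
  have hq3 : 3 ≤ q := by
    have := hq.two_le
    rcases hqodd with ⟨j, rfl⟩
    omega
  obtain ⟨k, rfl⟩ := nt_main q r hq3 hr (fun p hp _ hpd =>
    claim1 hrat hodd N hN q hq hqodd r hr hcard hab helem p hp hpd)
  obtain ⟨t, ht⟩ := claim2 hodd N hN hNne q hq hqodd k hcard hab helem
  have hNq : ∀ x : G, x ^ q = 1 → x ∈ N := by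
    intro x hx
    by_cases h : x = 1
    · rw [h]; exact N.one_mem
    · exact odd_class_in_normal hodd N hN hNne q hqodd helem x (orderOf_eq_prime hx h)
  have helem' : ∀ x ∈ N, x ^ q = 1 := by
    intro x hx
    by_cases h : x = 1
    · rw [h, one_pow]
    · rw [← helem x hx h, pow_orderOf_eq_one]
  obtain ⟨Q⟩ := (inferInstance : Nonempty (Sylow q G))
  have hQ := claim3 hrat N hN q hq hqodd hNq helem' t ht Q
  have hi : ¬ q ∣ N.index := by
    rw [← hQ]; exact Q.not_dvd_index
  have hco : (Nat.card N).Coprime N.index := by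
    rw [hcard]
    exact Nat.Coprime.pow_left _ ((Nat.Prime.coprime_iff_not_dvd hq).2 hi)
  obtain ⟨H, hH⟩ := Subgroup.exists_left_complement'_of_coprime hco
  refine ⟨H, hH, ?_, Q, hQ⟩
  rw [← hH.index_eq_card]
  exact hco.symm
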